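/- Existence of a blow-up supersolution near Γ_in. Let Ω ⊂ ℝ^N be of class W^{2,∞}, assume (M), (J0), (J1), and let b : cl(Ω)×𝒜 → ℝ^N be the drift of a Bellman Hamiltonian, with 𝒜 compact and b continuous, bounded and Lipschitz in x uniformly in α. For every x̄ ∈ Γ_in there exist r = r(x̄) > 0 and a positive function U_r ∈ C²(B_r(x̄) ∩ Ω) such that for every ξ < C_j⁻¹ r/2: (i) −b(x,α)·DU_r(x) − I_ξ[U_r](x) ≥ 0 for all x ∈ B_{r/2}(x̄) ∩ Ω and all α ∈ 𝒜; (ii) U_r(x) ≥ 1/ω_r(d(x)) for all x ∈ B_r(x̄) ∩ Ω, for some non-negative continuous function ω_r that is strictly increasing in a neighbourhood of 0 with ω_r(0) = 0. -/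

import Mathlib

set_option autoImplicit false

/- Common framework for censored nonlocal Hamilton–Jacobi equations with
Neumann boundary conditions (Barles-type viscosity solutions). -/

open Set Metric MeasureTheory Filter Topology Function
open scoped RealInnerProductSpace NNReal ENNReal

noncomputable section

namespace Censored

abbrev Euc (N : ℕ) : Type := EuclideanSpace ℝ (Fin N)

variable {N : ℕ}

/-- Signed distance to the boundary of `Ω`, positive inside `Ω`. -/
def sdist (Ω : Set (Euc N)) (x : Euc N) : ℝ := infDist x Ωᶜ - infDist x Ω

/-- A modulus of continuity. -/
def IsModulus (ω : ℝ → ℝ) : Prop :=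
  (∀ s, 0 ≤ ω s) ∧ Monotone ω ∧ Tendsto ω (nhdsWithin 0 (Ioi 0)) (nhds 0)

/-- A `W^{2,∞}` boundary chart for `Ω` at `s`, with radius `r`: a diffeomorphism of
class `W^{2,∞}` (i.e. `C^1` with Lipschitz differential, with inverse of the same
regularity) whose `N`-th component coincides with the signed distance. -/
def IsW2Chart (hN : 0 < N) (Ω : Set (Euc N)) (s : Euc N) (r : ℝ)
    (ψ ψinv : Euc N → Euc N) : Prop :=
  0 < r ∧
  ContDiffOn ℝ 1 ψ (ball s r) ∧
  (∃ L : ℝ≥0, LipschitzOnWith L (fun x => fderiv ℝ ψ x) (ball s r)) ∧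
  ContDiffOn ℝ 1 ψinv (ψ '' ball s r) ∧
  (∃ L : ℝ≥0, LipschitzOnWith L (fun x => fderiv ℝ ψinv x) (ψ '' ball s r)) ∧
  (∀ x ∈ ball s r, ψinv (ψ x) = x) ∧
  (∀ x ∈ ball s r, ψ x ⟨N - 1, Nat.sub_lt hN Nat.one_pos⟩ = sdist Ω x)

/-- Assumption (O): `Ω` is open of class `W^{2,∞}`. -/
def IsW2Domain (hN : 0 < N) (Ω : Set (Euc N)) : Prop :=
  IsOpen Ω ∧ ∀ s ∈ frontier Ω, ∃ r ψ ψinv, IsW2Chart hN Ω s r ψ ψinv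

/-- `n` is the exterior unit normal vector field to `∂Ω`:  `n = -D d` where `d` is the
signed distance (positive inside). -/
def IsExteriorNormal (Ω : Set (Euc N)) (n : Euc N → Euc N) : Prop :=
  ∀ x ∈ frontier Ω, ‖n x‖ = 1 ∧ HasGradientAt (sdist Ω) (-(n x)) x

/-- First part of assumption (M): the measures `μ_x` have a (measurable, nonnegative)
density `g x` with respect to Lebesgue measure, bounded by `Cμ |z|^{-(N+σ)}`. -/
def AssumptionM1 (Ω : Set (Euc N)) (g : Euc N → Euc N → ℝ) (Cμ σ : ℝ) : Prop :=
  0 < Cμ ∧ σ ∈ Ioo (0:ℝ) 1 ∧ (∀ x, Measurable (g x)) ∧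
  (∀ x ∈ closure Ω, ∀ z : Euc N, 0 ≤ g x z) ∧
  (∀ x ∈ closure Ω, ∀ z : Euc N, g x z ≤ Cμ * ‖z‖ ^ (-((N : ℝ) + σ)))

/-- Assumption (M). -/
def AssumptionM (Ω : Set (Euc N)) (g : Euc N → Euc N → ℝ) (Cμ Dμ σ : ℝ) : Prop :=
  AssumptionM1 Ω g Cμ σ ∧ 0 < Dμ ∧
  (∀ x ∈ closure Ω, ∀ y ∈ closure Ω, ∀ z : Euc N,
    |g x z - g y z| ≤ Dμ * ‖x - y‖ * ‖z‖ ^ (-((N : ℝ) + σ)))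

/-- Assumption (J0). -/
def AssumptionJ0 (Ω : Set (Euc N)) (j : Euc N → Euc N → Euc N) (Aj : ℝ) : Prop :=
  ∀ x ∈ closure Ω,
    ContDiff ℝ 1 (j x) ∧ Function.Bijective (j x) ∧
    ContDiff ℝ 1 (Function.invFun (j x)) ∧
    ∀ z : Euc N, ‖fderiv ℝ (Function.invFun (j x)) z‖ ≤ Aj

/-- Assumption (J1). -/
def AssumptionJ1 (Ω : Set (Euc N)) (j : Euc N → Euc N → Euc N) (Cj' Cj Dj : ℝ) : Prop :=
  0 < Cj' ∧ 0 < Cj ∧ 0 < Dj ∧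
  (∀ x ∈ closure Ω, ∀ z : Euc N, Cj' * ‖z‖ ≤ ‖j x z‖ ∧ ‖j x z‖ ≤ Cj * ‖z‖) ∧
  (∀ x ∈ closure Ω, ∀ y ∈ closure Ω, ∀ z : Euc N, ‖j x z - j y z‖ ≤ Dj * ‖z‖ * ‖x - y‖)

/-- The truncated censored nonlocal term over `{|z| ≥ ξ}` (`I^ξ`). -/
def Iout (Ω : Set (Euc N)) (j : Euc N → Euc N → Euc N) (g : Euc N → Euc N → ℝ)
    (ξ : ℝ) (u : Euc N → ℝ) (x : Euc N) : ℝ :=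
  ∫ z in {z : Euc N | ξ ≤ ‖z‖ ∧ x + j x z ∈ closure Ω}, (u (x + j x z) - u x) * g x z

/-- The truncated censored nonlocal term over `{|z| < ξ}` (`I_ξ`). -/
def Iin (Ω : Set (Euc N)) (j : Euc N → Euc N → Euc N) (g : Euc N → Euc N → ℝ)
    (ξ : ℝ) (φ : Euc N → ℝ) (x : Euc N) : ℝ :=
  ∫ z in {z : Euc N | ‖z‖ < ξ ∧ x + j x z ∈ closure Ω}, (φ (x + j x z) - φ x) * g x z

/-- The censored nonlocal operator of order `σ < 1`, as a principal value. -/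
def Ipv (Ω : Set (Euc N)) (j : Euc N → Euc N → Euc N) (g : Euc N → Euc N → ℝ)
    (u : Euc N → ℝ) (x : Euc N) : ℝ :=
  limUnder (nhdsWithin (0:ℝ) (Ioi 0)) (fun δ =>
    ∫ z in {z : Euc N | δ < ‖z‖ ∧ x + j x z ∈ closure Ω}, (u (x + j x z) - u x) * g x z)

/-- `u` is bounded on `S`. -/
def BddOn (u : Euc N → ℝ) (S : Set (Euc N)) : Prop := ∃ M, ∀ x ∈ S, |u x| ≤ M

/-- `u = u(x,t)` is bounded on `S × I`. -/
def BddOnT (u : Euc N → ℝ → ℝ) (S : Set (Euc N)) (I : Set ℝ) : Prop :=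
  ∃ M, ∀ x ∈ S, ∀ t ∈ I, |u x t| ≤ M

/-- Viscosity subsolution, with generalized Neumann boundary conditions, of the
stationary equation `F(x, u, Du, I[u]) = 0` in `Ω`, `∂u/∂n = 0` on `∂Ω`,
for the censored operator determined by `j, g` (with constant `Cj` from (J1)). -/
def IsSubSol (Ω : Set (Euc N)) (j : Euc N → Euc N → Euc N) (g : Euc N → Euc N → ℝ)
    (n : Euc N → Euc N) (Cj : ℝ) (F : Euc N → ℝ → Euc N → ℝ → ℝ) (u : Euc N → ℝ) : Prop :=
  ∀ ξ > (0:ℝ), ∀ φ : Euc N → ℝ, ContDiff ℝ 1 φ →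
    ∀ x ∈ closure Ω,
      (∀ y ∈ closedBall x (Cj * ξ) ∩ closure Ω, u y - φ y ≤ u x - φ x) →
      (x ∈ Ω → F x (u x) (gradient φ x) (Iin Ω j g ξ φ x + Iout Ω j g ξ u x) ≤ 0) ∧
      (x ∈ frontier Ω →
        min (F x (u x) (gradient φ x) (Iin Ω j g ξ φ x + Iout Ω j g ξ u x))
          ⟪gradient φ x, n x⟫ ≤ 0)

/-- Viscosity supersolution, with generalized Neumann boundary conditions. -/
def IsSuperSol (Ω : Set (Euc N)) (j : Euc N → Euc N → Euc N) (g : Euc N → Euc N → ℝ)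
    (n : Euc N → Euc N) (Cj : ℝ) (F : Euc N → ℝ → Euc N → ℝ → ℝ) (v : Euc N → ℝ) : Prop :=
  ∀ ξ > (0:ℝ), ∀ φ : Euc N → ℝ, ContDiff ℝ 1 φ →
    ∀ x ∈ closure Ω,
      (∀ y ∈ closedBall x (Cj * ξ) ∩ closure Ω, v x - φ x ≤ v y - φ y) →
      (x ∈ Ω → 0 ≤ F x (v x) (gradient φ x) (Iin Ω j g ξ φ x + Iout Ω j g ξ v x)) ∧
      (x ∈ frontier Ω →
        0 ≤ max (F x (v x) (gradient φ x) (Iin Ω j g ξ φ x + Iout Ω j g ξ v x))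
          ⟪gradient φ x, n x⟫)

/-- `F` corresponding to the stationary equation `u - I[u] + H(x,Du) = 0`. -/
def statF (H : Euc N → Euc N → ℝ) : Euc N → ℝ → Euc N → ℝ → ℝ :=
  fun x r p I => r - I + H x p

/-- `F` corresponding to the ergodic equation `λ - I[w] - H(x,Dw) = 0`. -/
def ergF (H : Euc N → Euc N → ℝ) (lam : ℝ) : Euc N → ℝ → Euc N → ℝ → ℝ :=
  fun x _ p I => lam - I - H x p

/-- Parabolic viscosity subsolution with generalized Neumann boundary conditions,
for `F(x, t, ∂_t u, u, Du, I[u(·,t)]) = 0` in `Ω × (0,∞)`. -/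
def IsParSubSol (Ω : Set (Euc N)) (j : Euc N → Euc N → Euc N) (g : Euc N → Euc N → ℝ)
    (n : Euc N → Euc N) (Cj : ℝ) (F : Euc N → ℝ → ℝ → ℝ → Euc N → ℝ → ℝ)
    (u : Euc N → ℝ → ℝ) : Prop :=
  ∀ ξ > (0:ℝ), ∀ φ : Euc N → ℝ → ℝ,
    ContDiff ℝ 1 (fun q : Euc N × ℝ => φ q.1 q.2) →
    ∀ x ∈ closure Ω, ∀ t ∈ Ioi (0:ℝ),
      (∀ y ∈ closedBall x (Cj * ξ) ∩ closure Ω, ∀ s ∈ Ioi (0:ℝ), |s - t| ≤ ξ →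
        u y s - φ y s ≤ u x t - φ x t) →
      (x ∈ Ω →
        F x t (deriv (φ x) t) (u x t) (gradient (fun y => φ y t) x)
          (Iin Ω j g ξ (fun y => φ y t) x + Iout Ω j g ξ (fun y => u y t) x) ≤ 0) ∧
      (x ∈ frontier Ω →
        min (F x t (deriv (φ x) t) (u x t) (gradient (fun y => φ y t) x)
              (Iin Ω j g ξ (fun y => φ y t) x + Iout Ω j g ξ (fun y => u y t) x))
          ⟪gradient (fun y => φ y t) x, n x⟫ ≤ 0)

/-- Parabolic viscosity supersolution with generalized Neumann boundary conditions. -/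
def IsParSuperSol (Ω : Set (Euc N)) (j : Euc N → Euc N → Euc N) (g : Euc N → Euc N → ℝ)
    (n : Euc N → Euc N) (Cj : ℝ) (F : Euc N → ℝ → ℝ → ℝ → Euc N → ℝ → ℝ)
    (v : Euc N → ℝ → ℝ) : Prop :=
  ∀ ξ > (0:ℝ), ∀ φ : Euc N → ℝ → ℝ,
    ContDiff ℝ 1 (fun q : Euc N × ℝ => φ q.1 q.2) →
    ∀ x ∈ closure Ω, ∀ t ∈ Ioi (0:ℝ),
      (∀ y ∈ closedBall x (Cj * ξ) ∩ closure Ω, ∀ s ∈ Ioi (0:ℝ), |s - t| ≤ ξ →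
        v x t - φ x t ≤ v y s - φ y s) →
      (x ∈ Ω →
        0 ≤ F x t (deriv (φ x) t) (v x t) (gradient (fun y => φ y t) x)
          (Iin Ω j g ξ (fun y => φ y t) x + Iout Ω j g ξ (fun y => v y t) x)) ∧
      (x ∈ frontier Ω →
        0 ≤ max (F x t (deriv (φ x) t) (v x t) (gradient (fun y => φ y t) x)
              (Iin Ω j g ξ (fun y => φ y t) x + Iout Ω j g ξ (fun y => v y t) x))
          ⟪gradient (fun y => φ y t) x, n x⟫)

/-- `F` for the parabolic equation `∂_t u - I[u] + H(x,t,u,Du) = 0`. -/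
def parF (H : Euc N → ℝ → ℝ → Euc N → ℝ) : Euc N → ℝ → ℝ → ℝ → Euc N → ℝ → ℝ :=
  fun x t pt r p I => pt - I + H x t r p

/-! ### Hamiltonians: Bellman form and coercive form (stationary) -/




/-- `H` is of Bellman type with drift `b` and cost `l` over the control set `A`. -/
def IsBellman {A : Type} (b : Euc N → A → Euc N) (l : Euc N → A → ℝ)
    (H : Euc N → Euc N → ℝ) : Prop :=
  ∀ x p, H x p = ⨆ α : A, (-⟪b x α, p⟫ - l x α)

/-- Continuity and boundedness of the Bellman data `b, l`. -/
def BellmanData {A : Type} [TopologicalSpace A]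
    (b : Euc N → A → Euc N) (l : Euc N → A → ℝ) : Prop :=
  Continuous (fun q : Euc N × A => b q.1 q.2) ∧ (∃ M, ∀ x α, ‖b x α‖ ≤ M) ∧
  Continuous (fun q : Euc N × A => l q.1 q.2) ∧ (∃ M, ∀ x α, |l x α| ≤ M)

/-- Assumption (C): uniform continuity of the cost `l`. -/
def AssumptionC (Ω : Set (Euc N)) {A : Type} (l : Euc N → A → ℝ) : Prop :=
  ∃ ω, IsModulus ω ∧ ∀ (α : A), ∀ x ∈ closure Ω, ∀ y ∈ closure Ω,
    |l x α - l y α| ≤ ω ‖x - y‖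

/-- Assumption (L): uniform Lipschitz continuity of the drift `b`. -/
def AssumptionL (Ω : Set (Euc N)) {A : Type} (b : Euc N → A → Euc N) : Prop :=
  ∃ C > (0:ℝ), ∀ (α : A), ∀ x ∈ closure Ω, ∀ y ∈ closure Ω,
    ‖b x α - b y α‖ ≤ C * ‖x - y‖

/-- The part of the boundary where the drift points inwards for every control. -/
def GammaIn (Ω : Set (Euc N)) (n : Euc N → Euc N) {A : Type}
    (b : Euc N → A → Euc N) : Set (Euc N) :=
  {x | x ∈ frontier Ω ∧ ∀ α : A, ⟪b x α, n x⟫ < 0}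

/-- The part of the boundary where the drift points outwards for every control. -/
def GammaOut (Ω : Set (Euc N)) (n : Euc N → Euc N) {A : Type}
    (b : Euc N → A → Euc N) : Set (Euc N) :=
  {x | x ∈ frontier Ω ∧ ∀ α : A, 0 < ⟪b x α, n x⟫}

/-- The part of the boundary where the drift points both inwards and outwards. -/
def GammaMix (Ω : Set (Euc N)) (n : Euc N → Euc N) {A : Type}
    (b : Euc N → A → Euc N) : Set (Euc N) :=
  {x | x ∈ frontier Ω ∧ ∃ α₁ α₂ : A, ⟪b x α₁, n x⟫ < 0 ∧ 0 < ⟪b x α₂, n x⟫}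

/-- `S` is a union of connected components of `T`. -/
def IsUnionOfComponents (S T : Set (Euc N)) : Prop :=
  S ⊆ T ∧ ∀ x ∈ S, connectedComponentIn T x ⊆ S

/-- Assumption (B). -/
def AssumptionB (Ω : Set (Euc N)) (n : Euc N → Euc N) {A : Type}
    (b : Euc N → A → Euc N) : Prop :=
  GammaIn Ω n b ∪ GammaOut Ω n b ∪ GammaMix Ω n b = frontier Ω ∧
  IsUnionOfComponents (GammaIn Ω n b) (frontier Ω) ∧
  IsUnionOfComponents (GammaOut Ω n b) (frontier Ω) ∧
  IsUnionOfComponents (GammaMix Ω n b) (frontier Ω)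

/-- All the structural assumptions on a Bellman Hamiltonian: (C), (L), (B) together
with continuity and boundedness of the data. -/
def StatBellmanOK (Ω : Set (Euc N)) (n : Euc N → Euc N) {A : Type} [TopologicalSpace A]
    (b : Euc N → A → Euc N) (l : Euc N → A → ℝ) (H : Euc N → Euc N → ℝ) : Prop :=
  BellmanData b l ∧ IsBellman b l H ∧ AssumptionC Ω l ∧ AssumptionL Ω b ∧ AssumptionB Ω n b

/-- Assumption (H1): superfractional coercivity of order `m > σ`. -/
def AssumptionH1 (Ω : Set (Euc N)) (H : Euc N → Euc N → ℝ) (σ m c₀ D : ℝ) : Prop :=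
  σ < m ∧ 0 < c₀ ∧ 0 < D ∧ ∀ x ∈ closure Ω, ∀ p : Euc N, c₀ * ‖p‖ ^ m - D ≤ H x p

/-- Assumption (Ha) (sublinear case) with constant `C` and modulus `ω₁`. -/
def AssumptionHa (H : Euc N → Euc N → ℝ) (C : ℝ) (ω₁ : ℝ → ℝ) : Prop :=
  0 < C ∧ IsModulus ω₁ ∧
  ∀ x y p q : Euc N, H y p - H x q ≤ ω₁ ‖x - y‖ * (1 + ‖p‖) + C * ‖p - q‖

/-- Assumption (Hb) (superlinear case) with constants `m, A, Cb`. -/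
def AssumptionHb (H : Euc N → Euc N → ℝ) (m A Cb : ℝ) : Prop :=
  1 < m ∧ 0 < A ∧ 0 < Cb ∧
  ∀ μ ∈ Ioo (0:ℝ) 1, ∀ x p : Euc N,
    H x p - μ * H x (μ⁻¹ • p) ≤ (1 - μ) * (Cb * (1 - m) * ‖p‖ ^ m + A)

/-- Assumption (Hc) with constant `C` and modulus `ω₁`. -/
def AssumptionHc (H : Euc N → Euc N → ℝ) (m C : ℝ) (ω₁ : ℝ → ℝ) : Prop :=
  0 < C ∧ IsModulus ω₁ ∧
  ∀ x y p q : Euc N,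
    H y p - H x q ≤ ω₁ ‖x - y‖ * (1 + (max ‖p‖ ‖q‖) ^ m)
      + C * ‖p - q‖ * (max ‖p‖ ‖q‖) ^ (m - 1)

/-- The structural assumptions on a coercive Hamiltonian:
(H1), (Ha) (sublinear) or (H1), (Hb), (Hc) (superlinear). -/
def StatCoerciveOK (Ω : Set (Euc N)) (H : Euc N → Euc N → ℝ) (σ : ℝ) : Prop :=
  ∃ m c₀ D, AssumptionH1 Ω H σ m c₀ D ∧
    ((m ≤ 1 ∧ ∃ C ω₁, AssumptionHa H C ω₁) ∨
     (∃ A Cb, AssumptionHb H m A Cb ∧ ∃ C ω₁, AssumptionHc H m C ω₁))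

/-- Assumption (E). -/
def AssumptionE (Ω : Set (Euc N)) (H : Euc N → Euc N → ℝ) : Prop :=
  ∀ R > (0:ℝ), ∃ HR : ℝ, ∀ x ∈ closure Ω, ∀ p : Euc N, ‖p‖ ≤ R → |H x p| ≤ HR

/-! ### Parabolic Hamiltonians and assumptions -/

/-- `H(x,t,r,p)` is of (time-dependent) Bellman type. -/
def IsParBellman {A : Type} (lam : Euc N → ℝ → A → ℝ) (b : Euc N → ℝ → A → Euc N)
    (l : Euc N → ℝ → A → ℝ) (H : Euc N → ℝ → ℝ → Euc N → ℝ) : Prop :=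
  ∀ x t r p, H x t r p = ⨆ α : A, (lam x t α * r - ⟪b x t α, p⟫ - l x t α)

/-- Continuity and boundedness of the parabolic Bellman data. -/
def ParBellmanData {A : Type} [TopologicalSpace A] (lam : Euc N → ℝ → A → ℝ)
    (b : Euc N → ℝ → A → Euc N) (l : Euc N → ℝ → A → ℝ) : Prop :=
  Continuous (fun q : Euc N × ℝ × A => lam q.1 q.2.1 q.2.2) ∧
  (∃ M, ∀ x t α, |lam x t α| ≤ M) ∧
  Continuous (fun q : Euc N × ℝ × A => b q.1 q.2.1 q.2.2) ∧
  (∃ M, ∀ x t α, ‖b x t α‖ ≤ M) ∧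
  Continuous (fun q : Euc N × ℝ × A => l q.1 q.2.1 q.2.2) ∧
  (∃ M, ∀ x t α, |l x t α| ≤ M)

/-- Assumption (C'): uniform continuity of `l` and `λ` in `(x,t)`, uniformly in `α`. -/
def AssumptionC' (Ω : Set (Euc N)) {A : Type} (lam l : Euc N → ℝ → A → ℝ) : Prop :=
  (∃ ω, IsModulus ω ∧ ∀ (α : A), ∀ x ∈ closure Ω, ∀ y ∈ closure Ω,
      ∀ t ∈ Ici (0:ℝ), ∀ s ∈ Ici (0:ℝ), |l x t α - l y s α| ≤ ω (‖x - y‖ + |t - s|)) ∧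
  (∃ ω, IsModulus ω ∧ ∀ (α : A), ∀ x ∈ closure Ω, ∀ y ∈ closure Ω,
      ∀ t ∈ Ici (0:ℝ), ∀ s ∈ Ici (0:ℝ), |lam x t α - lam y s α| ≤ ω (‖x - y‖ + |t - s|))

/-- Assumption (L'): uniform Lipschitz continuity of the drift `b` in `(x,t)`. -/
def AssumptionL' (Ω : Set (Euc N)) {A : Type} (b : Euc N → ℝ → A → Euc N) : Prop :=
  ∃ C > (0:ℝ), ∀ (α : A), ∀ x ∈ closure Ω, ∀ y ∈ closure Ω, ∀ s ∈ Ici (0:ℝ), ∀ t ∈ Ici (0:ℝ),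
    ‖b x s α - b y t α‖ ≤ C * (‖x - y‖ + |s - t|)

/-- Inward part of the boundary for time-dependent drift. -/
def GammaInT (Ω : Set (Euc N)) (n : Euc N → Euc N) {A : Type}
    (b : Euc N → ℝ → A → Euc N) : Set (Euc N) :=
  {x | x ∈ frontier Ω ∧ ∀ t ∈ Ici (0:ℝ), ∀ α : A, ⟪b x t α, n x⟫ < 0}

/-- Outward part of the boundary for time-dependent drift. -/
def GammaOutT (Ω : Set (Euc N)) (n : Euc N → Euc N) {A : Type}
    (b : Euc N → ℝ → A → Euc N) : Set (Euc N) :=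
  {x | x ∈ frontier Ω ∧ ∀ t ∈ Ici (0:ℝ), ∀ α : A, 0 < ⟪b x t α, n x⟫}

/-- Mixed part of the boundary for time-dependent drift. -/
def GammaMixT (Ω : Set (Euc N)) (n : Euc N → Euc N) {A : Type}
    (b : Euc N → ℝ → A → Euc N) : Set (Euc N) :=
  {x | x ∈ frontier Ω ∧ ∀ t ∈ Ici (0:ℝ),
    ∃ α₁ α₂ : A, ⟪b x t α₁, n x⟫ < 0 ∧ 0 < ⟪b x t α₂, n x⟫}

/-- Assumption (B'). -/
def AssumptionB' (Ω : Set (Euc N)) (n : Euc N → Euc N) {A : Type}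
    (b : Euc N → ℝ → A → Euc N) : Prop :=
  GammaInT Ω n b ∪ GammaOutT Ω n b ∪ GammaMixT Ω n b = frontier Ω ∧
  IsUnionOfComponents (GammaInT Ω n b) (frontier Ω) ∧
  IsUnionOfComponents (GammaOutT Ω n b) (frontier Ω) ∧
  IsUnionOfComponents (GammaMixT Ω n b) (frontier Ω)

/-- All the structural assumptions on a parabolic Bellman Hamiltonian: (C'), (L'), (B'). -/
def ParBellmanOK (Ω : Set (Euc N)) (n : Euc N → Euc N) {A : Type} [TopologicalSpace A]
    (lam : Euc N → ℝ → A → ℝ) (b : Euc N → ℝ → A → Euc N) (l : Euc N → ℝ → A → ℝ)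
    (H : Euc N → ℝ → ℝ → Euc N → ℝ) : Prop :=
  ParBellmanData lam b l ∧ IsParBellman lam b l H ∧
  AssumptionC' Ω lam l ∧ AssumptionL' Ω b ∧ AssumptionB' Ω n b

/-- Assumption (H'): monotonicity of `H` in the `u` variable. -/
def AssumptionH' (Ω : Set (Euc N)) (H : Euc N → ℝ → ℝ → Euc N → ℝ) : Prop :=
  ∃ K : ℝ, ∀ R > (0:ℝ), ∃ γ, -K ≤ γ ∧
    ∀ x ∈ closure Ω, ∀ t ∈ Icc (0:ℝ) R, ∀ r s : ℝ, |r| ≤ R → |s| ≤ R → s ≤ r →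
      ∀ p : Euc N, γ * (r - s) ≤ H x t r p - H x t s p

/-- Assumption (H''): the monotonicity constants `γ_R` are bounded below by some `γ₀ > 0`. -/
def AssumptionH'' (Ω : Set (Euc N)) (H : Euc N → ℝ → ℝ → Euc N → ℝ) : Prop :=
  ∃ γ₀ > (0:ℝ), ∀ R > (0:ℝ), ∃ γ, γ₀ ≤ γ ∧
    ∀ x ∈ closure Ω, ∀ t ∈ Icc (0:ℝ) R, ∀ r s : ℝ, |r| ≤ R → |s| ≤ R → s ≤ r →
      ∀ p : Euc N, γ * (r - s) ≤ H x t r p - H x t s p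

/-- Assumption (E'). -/
def AssumptionE' (Ω : Set (Euc N)) (H : Euc N → ℝ → ℝ → Euc N → ℝ) : Prop :=
  ∀ T > (0:ℝ), ∀ R > (0:ℝ), ∃ HR : ℝ, ∀ x ∈ Ω, ∀ t ∈ Icc (0:ℝ) T, ∀ r : ℝ, ∀ p : Euc N,
    |r| ≤ R → ‖p‖ ≤ R → |H x t r p| ≤ HR

/-- Assumption (H0'): separated structure `H(x,t,r,p) = H₀(x,r,p) - f(x,t)`. -/
def AssumptionH0' (H : Euc N → ℝ → ℝ → Euc N → ℝ) : Prop :=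
  ∃ (H₀ : Euc N → ℝ → Euc N → ℝ) (f : Euc N → ℝ → ℝ),
    Continuous (fun q : Euc N × ℝ × Euc N => H₀ q.1 q.2.1 q.2.2) ∧
    UniformContinuous (fun q : Euc N × ℝ => f q.1 q.2) ∧
    (∃ M, ∀ x t, |f x t| ≤ M) ∧
    ∀ x t r p, H x t r p = H₀ x r p - f x t

/-- Assumption (He'): `H` satisfies (H1), (Ha) in `x`, uniformly in `t`
and uniformly on compact sets in `r` (sublinearly coercive case). -/
def AssumptionHe' (Ω : Set (Euc N)) (H : Euc N → ℝ → ℝ → Euc N → ℝ) (σ : ℝ) : Prop :=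
  ∃ m : ℝ, σ < m ∧ m ≤ 1 ∧
    ∀ R > (0:ℝ),
      (∃ c₀ > (0:ℝ), ∃ D > (0:ℝ), ∀ x ∈ closure Ω, ∀ t ∈ Ici (0:ℝ), ∀ r : ℝ, |r| ≤ R →
        ∀ p : Euc N, c₀ * ‖p‖ ^ m - D ≤ H x t r p) ∧
      (∃ C > (0:ℝ), ∃ ω₁, IsModulus ω₁ ∧ ∀ x y : Euc N, ∀ t ∈ Ici (0:ℝ), ∀ r : ℝ, |r| ≤ R →
        ∀ p q : Euc N, H y t r p - H x t r q ≤ ω₁ ‖x - y‖ * (1 + ‖p‖) + C * ‖p - q‖)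

/-- Assumption (He''): `H` satisfies (H1), (Hb), (Hc) in `x`, uniformly in `t`
and uniformly on compact sets in `r` (superlinearly coercive case, exponent `m`). -/
def AssumptionHe'' (Ω : Set (Euc N)) (H : Euc N → ℝ → ℝ → Euc N → ℝ) (σ m : ℝ) : Prop :=
  1 < m ∧ σ < m ∧
  ∀ R > (0:ℝ),
    (∃ c₀ > (0:ℝ), ∃ D > (0:ℝ), ∀ x ∈ closure Ω, ∀ t ∈ Ici (0:ℝ), ∀ r : ℝ, |r| ≤ R →
      ∀ p : Euc N, c₀ * ‖p‖ ^ m - D ≤ H x t r p) ∧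
    (∃ A > (0:ℝ), ∃ Cb > (0:ℝ), ∀ μ ∈ Ioo (0:ℝ) 1, ∀ x ∈ closure Ω, ∀ t ∈ Ici (0:ℝ),
      ∀ r : ℝ, |r| ≤ R → ∀ p : Euc N,
        H x t r p - μ * H x t r (μ⁻¹ • p) ≤ (1 - μ) * (Cb * (1 - m) * ‖p‖ ^ m + A)) ∧
    (∃ C > (0:ℝ), ∃ ω₁, IsModulus ω₁ ∧ ∀ x y : Euc N, ∀ t ∈ Ici (0:ℝ), ∀ r : ℝ, |r| ≤ R →
      ∀ p q : Euc N, H y t r p - H x t r q ≤ ω₁ ‖x - y‖ * (1 + (max ‖p‖ ‖q‖) ^ m)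
        + C * ‖p - q‖ * (max ‖p‖ ‖q‖) ^ (m - 1))

/-- Structural parabolic coercive assumptions: (H0') and (He') or (He''). -/
def ParCoerciveOK (Ω : Set (Euc N)) (H : Euc N → ℝ → ℝ → Euc N → ℝ) (σ : ℝ) : Prop :=
  AssumptionH0' H ∧ (AssumptionHe' Ω H σ ∨ ∃ m, AssumptionHe'' Ω H σ m)

/-! ### Iterative covering property -/

/-- The iterated reachable sets `X_r(x)` of the censored jump process. -/
def Xiter (Ω : Set (Euc N)) (j : Euc N → Euc N → Euc N) (g : Euc N → Euc N → ℝ)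
    (x : Euc N) : ℕ → Set (Euc N)
  | 0 => {x}
  | r + 1 => (⋃ ξ ∈ Xiter Ω j g x r,
      (fun z => ξ + j ξ z) '' closure (Function.support (g ξ))) ∩ closure Ω

/-- Iterative covering property: `𝒳(x) = Ω` (i.e. the closure of the reachable set
is all of `closure Ω`) for every `x ∈ Ω`. -/
def CoveringProperty (Ω : Set (Euc N)) (j : Euc N → Euc N → Euc N)
    (g : Euc N → Euc N → ℝ) : Prop :=
  ∀ x ∈ Ω, closure (⋃ r : ℕ, Xiter Ω j g x r) = closure Ω

/-!
Take `U = ∑ₖ 2^(kκ) cutoff (2ᵏ Dₖ)`, where `Dₖ` is a smooth approximation of the signed distance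
`d` to order `2⁻ᵏ` whose differential near `x₀` stays close to the inward normal. Then `U` behaves
like `d ^ (-κ)`, and the inward drift gives `-⟪b, DU⟫ ≥ c / d`. The nonlocal term is of lower order
`d ^ (-(σ + 3κ))`, with `κ` so small that `σ + 3κ < 1`: although a jump may land arbitrarily close
to the boundary, where `U` is infinite, the jumps landing in the `k`-th layer lie in a slab of width
about `2⁻ᵏ`, and packing disjoint translates of the slab along the normal bounds their mass.
-/

section Cutoff

lemma hasDerivAt_max_zero_pow (n : ℕ) (x : ℝ) :
    HasDerivAt (fun y : ℝ => (max y 0) ^ (n + 2)) ((n + 2) * (max x 0) ^ (n + 1)) x := by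
  rcases lt_trichotomy x 0 with hx | rfl | hx
  · have hzero : (fun y : ℝ => (max y 0) ^ (n + 2)) =ᶠ[𝓝 x] fun _ => 0 := by
      filter_upwards [Iio_mem_nhds hx] with y hy
      rw [max_eq_right hy.le, zero_pow (by omega)]
    simpa [max_eq_right hx.le] using (hasDerivAt_const x (0 : ℝ)).congr_of_eventuallyEq hzero
  · have hbigO : (fun y : ℝ => (max y 0) ^ (n + 2)) =O[𝓝 0] fun y => ‖y - 0‖ ^ (n + 2) := by
      refine Asymptotics.IsBigO.of_bound 1 (Eventually.of_forall fun y => ?_)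
      rw [sub_zero, one_mul, norm_pow, norm_pow, norm_norm, Real.norm_of_nonneg (le_max_right y 0)]
      exact pow_le_pow_left₀ (le_max_right y 0) (max_le (le_abs_self y) (abs_nonneg y)) _
    simpa using (hbigO.hasFDerivAt (by omega)).hasDerivAt
  · have hpow : (fun y : ℝ => (max y 0) ^ (n + 2)) =ᶠ[𝓝 x] fun y => y ^ (n + 2) := by
      filter_upwards [Ioi_mem_nhds hx] with y hy
      rw [max_eq_left (le_of_lt hy)]
    simpa [max_eq_left hx.le] using (hasDerivAt_pow (n + 2) x).congr_of_eventuallyEq hpow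

lemma contDiff_max_zero_pow (n : ℕ) : ContDiff ℝ n fun x : ℝ => (max x 0) ^ (n + 1) := by
  induction n with
  | zero => exact contDiff_zero.2 (by fun_prop)
  | succ n ih =>
    have hderiv : deriv (fun x : ℝ => (max x 0) ^ (n + 2)) =
        fun x : ℝ => (n + 2 : ℝ) * (max x 0) ^ (n + 1) :=
      funext fun x => (hasDerivAt_max_zero_pow n x).deriv
    push_cast
    refine contDiff_succ_iff_deriv.2
      ⟨fun x => (hasDerivAt_max_zero_pow n x).differentiableAt, by simp, ?_⟩
    rw [hderiv]
    exact contDiff_const.mul ih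

/-- The `C²` cubic profile of one dyadic layer of the blow-up function: nonincreasing, at least `1`
on `(-∞, 3]` and supported in `(-∞, 4]`. -/
def cutoff (s : ℝ) : ℝ := (max (4 - s) 0) ^ 3

lemma cutoff_nonneg (s : ℝ) : 0 ≤ cutoff s := by unfold cutoff; positivity

lemma cutoff_antitone : Antitone cutoff := fun _ _ h => by unfold cutoff; gcongr

lemma cutoff_eq_zero {s : ℝ} (hs : 4 ≤ s) : cutoff s = 0 := by
  rw [cutoff, max_eq_right (by linarith), zero_pow three_ne_zero]

lemma one_le_cutoff {s : ℝ} (hs : s ≤ 3) : 1 ≤ cutoff s :=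
  one_le_pow₀ (le_max_of_le_left (by linarith))

lemma cutoff_le {s : ℝ} (hs : -1 ≤ s) : cutoff s ≤ 125 :=
  (cutoff_antitone hs).trans_eq (by norm_num [cutoff])

lemma contDiff_cutoff : ContDiff ℝ 2 cutoff :=
  (contDiff_max_zero_pow 2).comp (contDiff_const.sub contDiff_id)

lemma hasDerivAt_cutoff (s : ℝ) : HasDerivAt cutoff (-(3 * (max (4 - s) 0) ^ 2)) s := by
  have hcomp := (hasDerivAt_max_zero_pow 1 (4 - s)).comp s ((hasDerivAt_id s).const_sub 4)
  exact hcomp.congr_deriv (by norm_num)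

lemma cutoff_sub_le {s t : ℝ} (hs : -1 ≤ s) (ht : -1 ≤ t) :
    cutoff s - cutoff t ≤ 75 * |s - t| := by
  have hbound : ∀ r ∈ Ici (-1 : ℝ), ‖-(3 * (max (4 - r) 0) ^ 2)‖ ≤ 75 := by
    intro r hr
    have hmax : max (4 - r) 0 ≤ 5 := max_le (by linarith [mem_Ici.1 hr]) (by norm_num)
    rw [norm_neg, Real.norm_of_nonneg (by positivity)]
    nlinarith [le_max_right (4 - r) 0]
  exact (le_abs_self _).trans <| (convex_Ici (-1 : ℝ)).norm_image_sub_le_of_norm_hasDerivWithin_le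
    (fun r _ => (hasDerivAt_cutoff r).hasDerivWithinAt) hbound ht hs

end Cutoff

section DyadicScales

lemma exists_two_pow_mul_mem_Icc {δ : ℝ} (hδ : 0 < δ) (hδ1 : δ ≤ 1) :
    ∃ n : ℕ, (2 : ℝ) ^ n * δ ∈ Icc (1 : ℝ) 2 := by
  obtain ⟨n, hn, hn'⟩ := exists_nat_pow_near (one_le_one_div hδ hδ1) (one_lt_two (α := ℝ))
  refine ⟨n + 1, ((div_lt_iff₀ hδ).1 hn').le, ?_⟩
  rw [le_div_iff₀ hδ] at hn
  rw [pow_succ]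
  linarith

lemma eventually_lt_two_pow_mul {δ : ℝ} (hδ : 0 < δ) (c : ℝ) :
    ∀ᶠ n : ℕ in atTop, c < 2 ^ n * δ :=
  ((tendsto_pow_atTop_atTop_of_one_lt one_lt_two).atTop_mul_const hδ).eventually_gt_atTop c

lemma tsum_ofReal_two_pow_rpow_neg_lt_top {γ : ℝ} (hγ : 0 < γ) :
    ∑' k : ℕ, ENNReal.ofReal (((2 : ℝ) ^ k) ^ (-γ)) < ∞ := by
  have hterm : ∀ k : ℕ, ((2 : ℝ) ^ k) ^ (-γ) = ((2 : ℝ) ^ (-γ)) ^ k := fun k => by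
    rw [← Real.rpow_natCast_mul zero_le_two, mul_comm, Real.rpow_mul_natCast zero_le_two]
  have hsum : Summable fun k : ℕ => ((2 : ℝ) ^ k) ^ (-γ) := by
    simp_rw [hterm]
    exact summable_geometric_of_lt_one (by positivity)
      (Real.rpow_lt_one_of_one_lt_of_neg one_lt_two (by linarith))
  exact hsum.tsum_ofReal_lt_top

end DyadicScales

section Measure

lemma integral_le_of_lintegral_ofReal_le {α : Type*} [MeasurableSpace α] {μ : Measure α}
    {f : α → ℝ} {B : ℝ} (hB : 0 ≤ B)
    (hf : ∫⁻ z, ENNReal.ofReal (f z) ∂μ ≤ ENNReal.ofReal B) : ∫ z, f z ∂μ ≤ B := by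
  by_cases hint : Integrable f μ
  · rw [integral_eq_lintegral_pos_part_sub_lintegral_neg_part hint]
    exact (sub_le_self _ ENNReal.toReal_nonneg).trans (ENNReal.toReal_le_of_le_ofReal hB hf)
  · rwa [integral_undef hint]

lemma card_mul_setLIntegral_le_of_pairwiseDisjoint_translates {G ι : Type*} [AddGroup G]
    [MeasurableSpace G] [MeasurableAdd G] {μ : Measure G} [μ.IsAddRightInvariant]
    {I : Finset ι} {v : ι → G} {S B : Set G} (hS : MeasurableSet S)
    (hdisj : (I : Set ι).PairwiseDisjoint fun i => (· + v i) '' S)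
    (hsub : ∀ i ∈ I, (· + v i) '' S ⊆ B) {F H : G → ℝ≥0∞}
    (hFH : ∀ i ∈ I, ∀ y ∈ S, F y ≤ H (y + v i)) :
    I.card * ∫⁻ y in S, F y ∂μ ≤ ∫⁻ y in B, H y ∂μ := by
  have hmeas : ∀ i ∈ I, MeasurableSet ((· + v i) '' S) := fun i _ =>
    (MeasurableEquiv.addRight (v i)).measurableEmbedding.measurableSet_image.2 hS
  have htranslate : ∀ i ∈ I, ∫⁻ y in S, F y ∂μ ≤ ∫⁻ y in (· + v i) '' S, H y ∂μ := fun i hi =>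
    calc ∫⁻ y in S, F y ∂μ ≤ ∫⁻ y in S, H (y + v i) ∂μ := setLIntegral_mono' hS (hFH i hi)
      _ = ∫⁻ y in (· + v i) '' S, H y ∂μ :=
        (measurePreserving_add_right μ (v i)).setLIntegral_comp_emb
          (MeasurableEquiv.addRight (v i)).measurableEmbedding H S
  calc I.card * ∫⁻ y in S, F y ∂μ = ∑ _i ∈ I, ∫⁻ y in S, F y ∂μ := by
        rw [Finset.sum_const, nsmul_eq_mul]
    _ ≤ ∑ i ∈ I, ∫⁻ y in (· + v i) '' S, H y ∂μ := Finset.sum_le_sum htranslate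
    _ = ∫⁻ y in ⋃ i ∈ I, (· + v i) '' S, H y ∂μ := (lintegral_biUnion_finset hdisj hmeas H).symm
    _ ≤ ∫⁻ y in B, H y ∂μ := lintegral_mono_set (iUnion₂_subset hsub)

variable {E : Type*} [NormedAddCommGroup E] [NormedSpace ℝ E] [FiniteDimensional ℝ E]

lemma exists_abs_det_le (A : ℝ) : ∃ B : ℝ, ∀ L : E →L[ℝ] E, ‖L‖ ≤ A → |L.det| ≤ B := by
  obtain ⟨B, hB⟩ := (isCompact_closedBall (0 : E →L[ℝ] E) A).exists_bound_of_continuousOn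
    ContinuousLinearMap.continuous_det.continuousOn
  exact ⟨B, fun L hL => hB L (mem_closedBall_zero_iff.2 hL)⟩

variable [MeasurableSpace E] [BorelSpace E] {μ : Measure E} [μ.IsAddHaarMeasure]

lemma setLIntegral_preimage_comp_le {J K : E → E} (hKJ : LeftInverse K J)
    (hJK : LeftInverse J K) (hK : Differentiable ℝ K) {B : ℝ}
    (hB : ∀ w, |(fderiv ℝ K w).det| ≤ B) {S : Set E} (hS : MeasurableSet S) (F : E → ℝ≥0∞) :
    ∫⁻ z in J ⁻¹' S, F (J z) ∂μ ≤ ENNReal.ofReal B * ∫⁻ w in S, F w ∂μ := by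
  rw [← image_eq_preimage_of_inverse hJK hKJ, lintegral_image_eq_lintegral_abs_det_fderiv_mul μ hS
    (fun w _ => (hK w).hasFDerivAt.hasFDerivWithinAt) hJK.injective.injOn,
    ← lintegral_const_mul' _ _ ENNReal.ofReal_ne_top]
  refine lintegral_mono fun w => ?_
  dsimp only
  rw [hJK w]
  gcongr
  exact hB w

lemma rpow_neg_le_of_le_mul {c s t p : ℝ} (hc : 0 < c) (hs : 0 < s) (ht : 0 < t)
    (hle : t ≤ c * s) (hp : 0 ≤ p) : s ^ (-p) ≤ c ^ p * t ^ (-p) :=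
  calc s ^ (-p) = c ^ p * (c * s) ^ (-p) := by
        rw [Real.mul_rpow hc.le hs.le, ← mul_assoc, ← Real.rpow_add hc, add_neg_cancel,
          Real.rpow_zero, one_mul]
    _ ≤ c ^ p * t ^ (-p) := mul_le_mul_of_nonneg_left
        (Real.rpow_le_rpow_of_nonpos ht hle (neg_nonpos.2 hp)) (by positivity)

lemma setLIntegral_preimage_comp_mul_le {J K : E → E} (hKJ : LeftInverse K J)
    (hJK : LeftInverse J K) (hK : Differentiable ℝ K) {B : ℝ}
    (hB : ∀ w, |(fderiv ℝ K w).det| ≤ B) {c : ℝ} (hc : 0 < c) (hJ : ∀ z, ‖J z‖ ≤ c * ‖z‖)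
    {g : E → ℝ} {C p : ℝ} (hC : 0 ≤ C) (hp : 0 < p) (hg : ∀ z, g z ≤ C * ‖z‖ ^ (-p))
    {S : Set E} (hS : MeasurableSet S) (F : E → ℝ≥0∞) :
    ∫⁻ z in J ⁻¹' S, F (J z) * ENNReal.ofReal (g z) ∂μ ≤
      ENNReal.ofReal B * ENNReal.ofReal (C * c ^ p) *
        ∫⁻ w in S, F w * ENNReal.ofReal (‖w‖ ^ (-p)) ∂μ := by
  have hzero : J 0 = 0 := by simpa using hJ 0
  have hweight : ∀ z, g z ≤ C * c ^ p * ‖J z‖ ^ (-p) := by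
    intro z
    rw [mul_assoc]
    refine (hg z).trans (mul_le_mul_of_nonneg_left ?_ hC)
    rcases eq_or_ne z 0 with rfl | hz
    · rw [hzero, norm_zero, Real.zero_rpow (by linarith), mul_zero]
    have hJz : 0 < ‖J z‖ := norm_pos_iff.2 fun h => hz (hKJ.injective (h.trans hzero.symm))
    exact rpow_neg_le_of_le_mul hc (norm_pos_iff.2 hz) hJz (hJ z) hp.le
  calc ∫⁻ z in J ⁻¹' S, F (J z) * ENNReal.ofReal (g z) ∂μ
      ≤ ∫⁻ z in J ⁻¹' S, F (J z) * ENNReal.ofReal (C * c ^ p * ‖J z‖ ^ (-p)) ∂μ := by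
        gcongr with z
        exact hweight z
    _ ≤ ENNReal.ofReal B * ∫⁻ w in S, F w * ENNReal.ofReal (C * c ^ p * ‖w‖ ^ (-p)) ∂μ :=
        setLIntegral_preimage_comp_le hKJ hJK hK hB hS
          fun w => F w * ENNReal.ofReal (C * c ^ p * ‖w‖ ^ (-p))
    _ = _ := by
        have hsplit : ∀ w, F w * ENNReal.ofReal (C * c ^ p * ‖w‖ ^ (-p)) =
            ENNReal.ofReal (C * c ^ p) * (F w * ENNReal.ofReal (‖w‖ ^ (-p))) := fun w => by
          rw [ENNReal.ofReal_mul (by positivity), mul_left_comm]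
        simp_rw [hsplit, lintegral_const_mul' _ _ ENNReal.ofReal_ne_top, mul_assoc]

lemma lintegral_ball_rpow_norm_lt_top [Nontrivial E] (μ : Measure E) [μ.IsAddHaarMeasure] {κ : ℝ}
    (hκ : 0 < κ) :
    ∫⁻ z in ball (0 : E) 1, ENNReal.ofReal (‖z‖ ^ (κ - Module.finrank ℝ E)) ∂μ < ∞ := by
  have hradial : IntegrableOn (fun t : ℝ => t ^ (κ - 1)) (Ioo 0 1) :=
    (intervalIntegral.integrableOn_Ioo_rpow_iff one_pos).2 (by linarith)
  refine ((integrableOn_fun_norm_addHaar μ (f := fun t => t ^ (κ - Module.finrank ℝ E))).2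
    (hradial.congr_fun (fun t ht => ?_) measurableSet_Ioo)).lintegral_lt_top
  dsimp only
  rw [smul_eq_mul, ← Real.rpow_natCast, ← Real.rpow_add ht.1, Nat.cast_sub Module.finrank_pos]
  congr 1
  push_cast
  ring

end Measure

section Mollification

open scoped Convolution

variable {E : Type*} [NormedAddCommGroup E] [NormedSpace ℝ E]

lemma abs_fderiv_sub_le_of_approximatesLinearOn {f : E → ℝ} {ℓ : E →L[ℝ] ℝ} {s : Set E}
    {c : ℝ≥0} {x : E} (hf : ApproximatesLinearOn f ℓ s c) (hs : s ∈ 𝓝 x)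
    (hfx : DifferentiableAt ℝ f x) (v : E) :
    |fderiv ℝ f x v - ℓ v| ≤ c * ‖v‖ := by
  have hnorm : ‖fderiv ℝ f x - ℓ‖ ≤ c :=
    (hfx.hasFDerivAt.sub ℓ.hasFDerivAt).le_of_lipschitzOn hs
      (ApproximatesLinearOn.approximatesLinearOn_iff_lipschitzOnWith.1 hf)
  exact (fderiv ℝ f x - ℓ).le_of_opNorm_le hnorm v

variable [FiniteDimensional ℝ E]

lemma approximatesLinearOn_normed_convolution [MeasurableSpace E] [BorelSpace E] {μ : Measure E}
    [μ.IsAddHaarMeasure] (φ : ContDiffBump (0 : E)) {f : E → ℝ} (hf : Continuous f)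
    {ℓ : E →L[ℝ] ℝ} {s : Set E} {c : ℝ≥0}
    (hfℓ : ApproximatesLinearOn f ℓ (thickening φ.rOut s) c) :
    ApproximatesLinearOn (φ.normed μ ⋆[ContinuousLinearMap.lsmul ℝ ℝ, μ] f) ℓ s c := by
  have hexists : ConvolutionExists (φ.normed μ) f (ContinuousLinearMap.lsmul ℝ ℝ) μ :=
    φ.hasCompactSupport_normed.convolutionExists_left _ φ.continuous_normed hf.locallyIntegrable
  intro x hx y hy
  have hincrement : (φ.normed μ ⋆[ContinuousLinearMap.lsmul ℝ ℝ, μ] f) x -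
      (φ.normed μ ⋆[ContinuousLinearMap.lsmul ℝ ℝ, μ] f) y =
      (φ.normed μ ⋆[ContinuousLinearMap.lsmul ℝ ℝ, μ] fun u => f u - f (u + (y - x))) x := by
    rw [convolution_def, convolution_def, convolution_def, ← integral_sub (hexists x) (hexists y)]
    simp only [ContinuousLinearMap.lsmul_apply, smul_eq_mul, mul_sub, sub_add_sub_cancel']
  rw [hincrement, ← dist_eq_norm]
  refine dist_convolution_le (by positivity) φ.support_normed_eq.subset φ.nonneg_normed
    φ.integral_normed (by fun_prop) fun u hu => ?_
  have hu' : u + (y - x) ∈ thickening φ.rOut s :=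
    mem_thickening_iff.2 ⟨y, hy, by
      rwa [dist_eq_norm, add_sub_assoc, sub_sub_cancel_left, ← sub_eq_add_neg, ← dist_eq_norm]⟩
  have hux := hfℓ u (mem_thickening_iff.2 ⟨x, hx, hu⟩) (u + (y - x)) hu'
  rwa [sub_add_cancel_left, neg_sub, ← dist_eq_norm] at hux

lemma exists_contDiff_approximatesLinearOn {f : E → ℝ} (hf : UniformContinuous f) {ℓ : E →L[ℝ] ℝ}
    {x₀ : E} {r R : ℝ} (hrR : r < R) {c : ℝ≥0} (hfℓ : ApproximatesLinearOn f ℓ (ball x₀ R) c)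
    {η : ℝ} (hη : 0 < η) :
    ∃ D : E → ℝ, ContDiff ℝ 2 D ∧ (∀ x, |D x - f x| ≤ η) ∧
      ApproximatesLinearOn D ℓ (ball x₀ r) c := by
  borelize E
  let μ : Measure E := Measure.addHaar
  obtain ⟨δ, hδ, hδη⟩ := Metric.uniformContinuous_iff.1 hf η hη
  have hρ : 0 < min δ (R - r) := lt_min hδ (sub_pos.2 hrR)
  let φ : ContDiffBump (0 : E) := ⟨min δ (R - r) / 2, min δ (R - r), half_pos hρ, half_lt_self hρ⟩
  refine ⟨φ.normed μ ⋆[ContinuousLinearMap.lsmul ℝ ℝ, μ] f,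
    φ.hasCompactSupport_normed.contDiff_convolution_left _ φ.contDiff_normed
      hf.continuous.locallyIntegrable, fun x => ?_, ?_⟩
  · rw [← Real.dist_eq]
    exact φ.dist_normed_convolution_le hf.continuous.aestronglyMeasurable
      fun y hy => (hδη (lt_of_lt_of_le hy (min_le_left _ _))).le
  · refine approximatesLinearOn_normed_convolution φ hf.continuous (hfℓ.mono_set ?_)
    refine (thickening_ball x₀ _ _).trans (ball_subset_ball ?_)
    change min δ (R - r) + r ≤ R
    linarith [min_le_right δ (R - r)]

end Mollification

section BlowupSeries

lemma ofReal_tsum_sub_tsum_le {ι : Type*} {f g : ι → ℝ} (hg : Summable g) (hg0 : ∀ i, 0 ≤ g i) :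
    ENNReal.ofReal (∑' i, f i - ∑' i, g i) ≤ ∑' i, ENNReal.ofReal (f i - g i) := by
  by_cases hf : Summable f
  · have hpos : Summable fun i => max (f i - g i) 0 :=
      (hf.sub hg).abs.of_nonneg_of_le (fun i => le_max_right _ _)
        fun i => max_le (le_abs_self _) (abs_nonneg _)
    calc ENNReal.ofReal (∑' i, f i - ∑' i, g i)
        ≤ ENNReal.ofReal (∑' i, max (f i - g i) 0) := by
          rw [← hf.tsum_sub hg]
          exact ENNReal.ofReal_le_ofReal
            ((hf.sub hg).tsum_le_tsum (fun i => le_max_left _ _) hpos)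
      _ = ∑' i, ENNReal.ofReal (f i - g i) := by
          rw [ENNReal.ofReal_tsum_of_nonneg (fun i => le_max_right _ _) hpos]
          simp only [ENNReal.ofReal_max, ENNReal.ofReal_zero, max_eq_left zero_le]
  · rw [tsum_eq_zero_of_not_summable hf, zero_sub,
      ENNReal.ofReal_of_nonpos (neg_nonpos.2 (tsum_nonneg hg0))]
    exact zero_le

variable {E : Type*}

/-- The `k`-th layer of the blow-up function: where `D k` approximates `d` to order `2⁻ᵏ`, it has
size `2^(k a)` on the slab `d ≲ 2⁻ᵏ` and vanishes away from that slab. -/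
def blowupTerm (a : ℝ) (D : ℕ → E → ℝ) (k : ℕ) (x : E) : ℝ :=
  ((2 : ℝ) ^ k) ^ a * cutoff (2 ^ k * D k x)

/-- The blow-up function. Where `d > 0` only finitely many layers are nonzero; where `d = 0` the
series diverges, so its value there is `0`. -/
def blowupSeries (a : ℝ) (D : ℕ → E → ℝ) (x : E) : ℝ := ∑' k, blowupTerm a D k x

/-- The functions `D k` are `C²` approximations of `d` at the dyadic scales `2⁻ᵏ`. -/
structure IsDyadicApprox [NormedAddCommGroup E] [NormedSpace ℝ E] (d : E → ℝ) (D : ℕ → E → ℝ) :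
    Prop where
  contDiff : ∀ k, ContDiff ℝ 2 (D k)
  abs_sub_le : ∀ k x, |D k x - d x| ≤ 1 / 2 ^ k

lemma blowupTerm_nonneg (a : ℝ) (D : ℕ → E → ℝ) (k : ℕ) (x : E) : 0 ≤ blowupTerm a D k x :=
  mul_nonneg (by positivity) (cutoff_nonneg _)

namespace IsDyadicApprox

variable [NormedAddCommGroup E] [NormedSpace ℝ E] {d : E → ℝ} {D : ℕ → E → ℝ} {a : ℝ} {x : E}

lemma abs_two_pow_mul_sub_le (hD : IsDyadicApprox d D) (k : ℕ) (x : E) :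
    |2 ^ k * D k x - 2 ^ k * d x| ≤ 1 := by
  rw [← mul_sub, abs_mul, abs_of_pos (by positivity), ← le_div_iff₀' (by positivity)]
  exact hD.abs_sub_le k x

lemma neg_one_le_two_pow_mul (hD : IsDyadicApprox d D) (k : ℕ) (hx : 0 ≤ d x) :
    -1 ≤ 2 ^ k * D k x := by
  have hclose := abs_le.1 (hD.abs_two_pow_mul_sub_le k x)
  have hdx : 0 ≤ 2 ^ k * d x := by positivity
  linarith

lemma blowupTerm_eq_zero_of_notMem_range (hD : IsDyadicApprox d D) {n : ℕ}
    (hx : 5 < 2 ^ n * d x) {k : ℕ} (hk : k ∉ Finset.range n) : blowupTerm a D k x = 0 := by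
  have hdx : 0 < d x := pos_of_mul_pos_right (by linarith) (by positivity : (0 : ℝ) ≤ 2 ^ n)
  have hpow : (2 : ℝ) ^ n * d x ≤ 2 ^ k * d x := by
    gcongr
    · exact one_le_two
    · simpa using hk
  have hclose := abs_le.1 (hD.abs_two_pow_mul_sub_le k x)
  rw [blowupTerm, cutoff_eq_zero (by linarith), mul_zero]

lemma one_le_cutoff_two_pow_mul (hD : IsDyadicApprox d D) {k : ℕ} (hx : 2 ^ k * d x ≤ 2) :
    1 ≤ cutoff (2 ^ k * D k x) :=
  one_le_cutoff (by linarith [(abs_le.1 (hD.abs_two_pow_mul_sub_le k x)).2])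

lemma summable_blowupTerm (hD : IsDyadicApprox d D) (hx : 0 < d x) :
    Summable fun k => blowupTerm a D k x := by
  obtain ⟨n, hn⟩ := (eventually_lt_two_pow_mul hx 5).exists
  exact summable_of_ne_finset_zero fun k hk => hD.blowupTerm_eq_zero_of_notMem_range hn hk

lemma eventually_blowupSeries_eventuallyEq_sum (hD : IsDyadicApprox d D) (hd : ContinuousAt d x)
    (hx : 0 < d x) :
    ∀ᶠ n in atTop, blowupSeries a D =ᶠ[𝓝 x] fun y => ∑ k ∈ Finset.range n, blowupTerm a D k y := by
  filter_upwards [eventually_lt_two_pow_mul hx 5] with n hn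
  filter_upwards [(hd.const_mul (2 ^ n)).eventually (lt_mem_nhds hn)] with y hy
  exact tsum_eq_sum fun k hk => hD.blowupTerm_eq_zero_of_notMem_range hy hk

lemma contDiff_blowupTerm (hD : IsDyadicApprox d D) (k : ℕ) : ContDiff ℝ 2 (blowupTerm a D k) :=
  contDiff_const.mul (contDiff_cutoff.comp (contDiff_const.mul (hD.contDiff k)))

lemma contDiffAt_blowupSeries (hD : IsDyadicApprox d D) (hd : ContinuousAt d x) (hx : 0 < d x) :
    ContDiffAt ℝ 2 (blowupSeries a D) x := by
  obtain ⟨n, hn⟩ := (hD.eventually_blowupSeries_eventuallyEq_sum (a := a) hd hx).exists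
  exact (ContDiff.sum fun k _ => hD.contDiff_blowupTerm k).contDiffAt.congr_of_eventuallyEq hn

lemma rpow_neg_le_blowupSeries (hD : IsDyadicApprox d D) (ha : 0 ≤ a) (hx : 0 < d x)
    (hx1 : d x ≤ 1) : (d x) ^ (-a) ≤ blowupSeries a D x := by
  obtain ⟨n, hn1, hn2⟩ := exists_two_pow_mul_mem_Icc hx hx1
  calc (d x) ^ (-a) = ((d x)⁻¹) ^ a := by rw [Real.rpow_neg hx.le, Real.inv_rpow hx.le]
    _ ≤ ((2 : ℝ) ^ n) ^ a := by
      gcongr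
      rwa [inv_le_iff_one_le_mul₀ hx]
    _ ≤ blowupTerm a D n x := le_mul_of_one_le_right (by positivity)
        (hD.one_le_cutoff_two_pow_mul hn2)
    _ ≤ blowupSeries a D x :=
        (hD.summable_blowupTerm hx).le_tsum n fun k _ => blowupTerm_nonneg a D k x

lemma fderiv_blowupTerm_apply (hD : IsDyadicApprox d D) (k : ℕ) (x v : E) :
    fderiv ℝ (blowupTerm a D k) x v =
      -(3 * ((2 : ℝ) ^ k) ^ a * 2 ^ k * (max (4 - 2 ^ k * D k x) 0) ^ 2 * fderiv ℝ (D k) x v) := by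
  have hDk := ((hD.contDiff k).differentiable two_ne_zero x).hasFDerivAt
  have hterm := ((hasDerivAt_cutoff (2 ^ k * D k x)).comp_hasFDerivAt x
    (hDk.const_mul (2 ^ k))).const_mul (((2 : ℝ) ^ k) ^ a)
  rw [show fderiv ℝ (blowupTerm a D k) x = _ from hterm.fderiv]
  simp only [_root_.smul_apply, smul_eq_mul]
  ring

lemma fderiv_blowupSeries_le (hD : IsDyadicApprox d D) (ha : 0 ≤ a) (hd : ContinuousAt d x)
    (hx : 0 < d x) (hx1 : d x ≤ 1) {c : ℝ} (hc : 0 ≤ c) {v : E}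
    (hv : ∀ k, c ≤ fderiv ℝ (D k) x v) : fderiv ℝ (blowupSeries a D) x v ≤ -(c / d x) := by
  obtain ⟨n, hn1, hn2⟩ := exists_two_pow_mul_mem_Icc hx hx1
  obtain ⟨m, hm, hnm⟩ := ((hD.eventually_blowupSeries_eventuallyEq_sum (a := a) hd hx).and
    (eventually_gt_atTop n)).exists
  let F : ℕ → ℝ := fun k =>
    3 * ((2 : ℝ) ^ k) ^ a * 2 ^ k * (max (4 - 2 ^ k * D k x) 0) ^ 2 * fderiv ℝ (D k) x v
  have hF : ∀ k, 0 ≤ F k := fun k => mul_nonneg (by positivity) (hc.trans (hv k))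
  have hdominant : c / d x ≤ F n := by
    have hmax : 1 ≤ max (4 - 2 ^ n * D n x) 0 :=
      le_max_of_le_left (by linarith [(abs_le.1 (hD.abs_two_pow_mul_sub_le n x)).2])
    have hweight : 1 ≤ ((2 : ℝ) ^ n) ^ a := Real.one_le_rpow (one_le_pow₀ one_le_two) ha
    have hscale : (d x)⁻¹ ≤ 2 ^ n := by rwa [inv_le_iff_one_le_mul₀ hx]
    calc c / d x = 1 * 1 * (d x)⁻¹ * 1 ^ 2 * c := by ring
      _ ≤ F n := by
        dsimp only [F]
        gcongr
        · norm_num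
        · exact hv n
  calc fderiv ℝ (blowupSeries a D) x v
      = ∑ k ∈ Finset.range m, fderiv ℝ (blowupTerm a D k) x v := by
        rw [hm.fderiv_eq, fderiv_fun_sum fun k _ =>
          (hD.contDiff_blowupTerm k).differentiable two_ne_zero x, _root_.sum_apply]
    _ = -∑ k ∈ Finset.range m, F k := by
        simp_rw [hD.fderiv_blowupTerm_apply, Finset.sum_neg_distrib, F]
    _ ≤ -F n := neg_le_neg (Finset.single_le_sum (fun k _ => hF k) (Finset.mem_range.2 hnm))
    _ ≤ -(c / d x) := neg_le_neg hdominant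

end IsDyadicApprox

end BlowupSeries

section NonlocalEstimate

lemma setLIntegral_cutoff_sub_le_slab {α : Type*} [MeasurableSpace α] {μ : Measure α}
    {S : Set α} {f : α → ℝ} {T : ℝ} (hfm : Measurable f) (hS : MeasurableSet S)
    (hfS : ∀ w ∈ S, -1 ≤ T * f w) {t : ℝ} (ht : 0 ≤ t) (F : α → ℝ≥0∞) :
    ∫⁻ w in S, ENNReal.ofReal (cutoff (T * f w) - t) * F w ∂μ ≤
      ENNReal.ofReal 125 * ∫⁻ w in S ∩ {w | T * f w ≤ 4}, F w ∂μ := by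
  have hslab : MeasurableSet (S ∩ {w | T * f w ≤ 4}) :=
    hS.inter (measurableSet_le (hfm.const_mul T) measurable_const)
  rw [← lintegral_const_mul' _ _ ENNReal.ofReal_ne_top, ← lintegral_indicator hslab]
  refine (setLIntegral_mono' hS fun w hw => ?_).trans (setLIntegral_le_lintegral _ _)
  by_cases hw4 : T * f w ≤ 4
  · rw [indicator_of_mem (show w ∈ S ∩ {w | T * f w ≤ 4} from ⟨hw, hw4⟩)]
    gcongr
    linarith [cutoff_le (hfS w hw)]
  · rw [cutoff_eq_zero (not_le.1 hw4).le, ENNReal.ofReal_of_nonpos (by linarith), zero_mul]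
    exact zero_le

variable {E : Type*} [NormedAddCommGroup E] [NormedSpace ℝ E] {ℓ : E →L[ℝ] ℝ} {e : E} {S : Set E}
  {f : E → ℝ} {c : ℝ≥0}

lemma abs_sub_le_of_approximatesLinearOn (hf : ApproximatesLinearOn f ℓ S c) (hℓ : ‖ℓ‖ ≤ 1)
    (hc : (c : ℝ) ≤ 1) {x y : E} (hx : x ∈ S) (hy : y ∈ S) : |f x - f y| ≤ 2 * ‖x - y‖ := by
  have happrox := hf x hx y hy
  have hlinear := ℓ.le_of_opNorm_le hℓ (x - y)
  have hslack : c * ‖x - y‖ ≤ 1 * ‖x - y‖ := by gcongr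
  calc |f x - f y| = ‖ℓ (x - y) + (f x - f y - ℓ (x - y))‖ := by
        rw [add_sub_cancel, Real.norm_eq_abs]
    _ ≤ ‖ℓ (x - y)‖ + ‖f x - f y - ℓ (x - y)‖ := norm_add_le _ _
    _ ≤ 2 * ‖x - y‖ := by linarith

lemma le_sub_of_approximatesLinearOn (hf : ApproximatesLinearOn f ℓ S c) (hc : (c : ℝ) ≤ 1 / 2)
    (he : ‖e‖ = 1) (hℓe : ℓ e = 1) {x y : E} (hx : x ∈ S) (hy : y ∈ S) {s : ℝ} (hs : 0 ≤ s)
    (hxy : x - y = s • e) : s / 2 ≤ f x - f y := by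
  have happrox := hf x hx y hy
  rw [hxy, map_smul, hℓe, smul_eq_mul, mul_one, norm_smul, he, mul_one, Real.norm_of_nonneg hs]
    at happrox
  have hslack : c * s ≤ 1 / 2 * s := by gcongr
  linarith [(abs_le.1 happrox).1]

lemma pairwiseDisjoint_translates_of_approximatesLinearOn (hf : ApproximatesLinearOn f ℓ S c)
    (hc : (c : ℝ) ≤ 1 / 2) (he : ‖e‖ = 1) (hℓe : ℓ e = 1) {h : ℝ} (hh : 0 ≤ h)
    (hosc : ∀ x ∈ S, ∀ y ∈ S, f x - f y < h / 2) (I : Set ℕ) :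
    I.PairwiseDisjoint fun i : ℕ => (· + ((i : ℝ) * h) • e) '' S := by
  refine (pairwise_disjoint_on _).2 (fun i k hik => ?_) |>.set_pairwise I
  rw [Set.disjoint_left]
  rintro _ ⟨x, hx, rfl⟩ ⟨y, hy, hyx⟩
  have hik' : (1 : ℝ) ≤ (k : ℝ) - i := by
    rw [le_sub_iff_add_le']
    exact_mod_cast hik
  have hxy : x - y = (((k : ℝ) - i) * h) • e := by
    rw [sub_mul, sub_smul, sub_eq_sub_iff_add_eq_add, add_comm _ y]
    exact hyx.symm
  have hgrow := le_sub_of_approximatesLinearOn hf hc he hℓe hx hy (by positivity) hxy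
  linarith [hosc x hx y hy, le_mul_of_one_le_left hh hik']

lemma rpow_neg_add_le_mul_rpow_sub {n σ κ ρ s t : ℝ} (hρ : 0 < ρ) (hρs : ρ ≤ s) (ht : 0 < t)
    (hts : t ≤ 2 * s) (hσκ : 0 ≤ σ + κ) (hκ : κ ≤ n) :
    s ^ (-(n + σ)) ≤ ρ ^ (-(σ + κ)) * 2 ^ (n - κ) * t ^ (κ - n) := by
  have hs : 0 < s := hρ.trans_le hρs
  calc s ^ (-(n + σ)) = s ^ (-(σ + κ)) * s ^ (-(n - κ)) := by
        rw [← Real.rpow_add hs]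
        ring_nf
    _ ≤ ρ ^ (-(σ + κ)) * (2 ^ (n - κ) * t ^ (-(n - κ))) :=
        mul_le_mul (Real.rpow_le_rpow_of_nonpos hρ hρs (by linarith))
          (rpow_neg_le_of_le_mul two_pos hs ht hts (by linarith)) (by positivity) (by positivity)
    _ = ρ ^ (-(σ + κ)) * 2 ^ (n - κ) * t ^ (κ - n) := by rw [neg_sub, mul_assoc]

lemma one_le_ofReal_two_div_mul_natFloor {a : ℝ} (ha : 1 ≤ a) :
    (1 : ℝ≥0∞) ≤ ENNReal.ofReal (2 / a) * ⌊a⌋₊ := by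
  have hfloor : (1 : ℝ) ≤ ⌊a⌋₊ := by exact_mod_cast Nat.one_le_floor_iff a |>.2 ha
  rw [← ENNReal.ofReal_natCast, ← ENNReal.ofReal_mul (by positivity), ENNReal.one_le_ofReal,
    div_mul_eq_mul_div, one_le_div (by positivity)]
  linarith [Nat.lt_floor_add_one a]

lemma cutoff_sub_le_rpow {s t u τ : ℝ} (hs : -1 ≤ s) (ht : -1 ≤ t) (hst : |s - t| ≤ u)
    (hτ : 0 ≤ τ) (hτ1 : τ ≤ 1) : cutoff s - cutoff t ≤ 125 * u ^ τ := by
  have hu : 0 ≤ u := (abs_nonneg _).trans hst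
  rcases le_total 1 u with hu1 | hu1
  · linarith [cutoff_le hs, cutoff_nonneg t, Real.one_le_rpow hu1 hτ]
  · linarith [cutoff_sub_le hs ht, Real.self_le_rpow_of_le_one hu hu1 hτ1]

variable [MeasurableSpace E] {μ : Measure E} {σ κ δ T : ℝ}

local notation "dim" => (Module.finrank ℝ E : ℝ)

lemma setLIntegral_cutoff_sub_le_rpow_mul (hf : ApproximatesLinearOn f ℓ S c) (hℓ : ‖ℓ‖ ≤ 1)
    (hc : (c : ℝ) ≤ 1) (hS : MeasurableSet S) (hSball : S ⊆ ball 0 1) (h0 : 0 ∈ S) (hT : 0 ≤ T)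
    (hfS : ∀ w ∈ S, -1 ≤ T * f w) (hσκ : 0 ≤ σ + κ) (hσκ1 : σ + κ ≤ 1) :
    ∫⁻ w in S, ENNReal.ofReal (cutoff (T * f w) - cutoff (T * f 0)) *
        ENNReal.ofReal (‖w‖ ^ (-(dim + σ))) ∂μ ≤
      ENNReal.ofReal (125 * (2 * T) ^ (σ + κ)) *
        ∫⁻ w in ball (0 : E) 1, ENNReal.ofReal (‖w‖ ^ (κ - dim)) ∂μ := by
  rw [← lintegral_const_mul' _ _ ENNReal.ofReal_ne_top]
  refine (setLIntegral_mono' hS fun w hw => ?_).trans (lintegral_mono_set hSball)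
  rcases eq_or_ne w 0 with rfl | hw0
  · rw [sub_self, ENNReal.ofReal_zero, zero_mul]
    exact zero_le
  have hw0 : 0 < ‖w‖ := norm_pos_iff.2 hw0
  have hdist : |T * f w - T * f 0| ≤ 2 * T * ‖w‖ := by
    have hlip := abs_sub_le_of_approximatesLinearOn hf hℓ hc hw h0
    rw [sub_zero] at hlip
    rw [← mul_sub, abs_mul, abs_of_nonneg hT]
    nlinarith
  rw [← ENNReal.ofReal_mul' (by positivity), ← ENNReal.ofReal_mul (by positivity)]
  refine ENNReal.ofReal_le_ofReal ?_
  calc (cutoff (T * f w) - cutoff (T * f 0)) * ‖w‖ ^ (-(dim + σ))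
      ≤ 125 * (2 * T * ‖w‖) ^ (σ + κ) * ‖w‖ ^ (-(dim + σ)) := by
        gcongr
        exact cutoff_sub_le_rpow (hfS w hw) (hfS 0 h0) hdist hσκ hσκ1
    _ = 125 * (2 * T) ^ (σ + κ) * ‖w‖ ^ (κ - dim) := by
        rw [Real.mul_rpow (by positivity) hw0.le, ← mul_assoc, mul_assoc, ← Real.rpow_add hw0]
        ring_nf

variable [BorelSpace E] [μ.IsAddHaarMeasure]

-- The translates of the slab `S` by `i • h • e` with `i < m` are pairwise disjoint.
lemma natCast_mul_setLIntegral_slab_le (hf : ApproximatesLinearOn f ℓ S c)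
    (hc : (c : ℝ) ≤ 1 / 2) (he : ‖e‖ = 1) (hℓe : ℓ e = 1) (hS : MeasurableSet S)
    (hSball : S ⊆ ball 0 (1 / 2)) {h ρ : ℝ} (hh : 0 ≤ h) (hρ : 0 < ρ) (hρ1 : ρ ≤ 1)
    (hSρ : ∀ w ∈ S, ρ ≤ ‖w‖) (hosc : ∀ x ∈ S, ∀ y ∈ S, f x - f y < h / 2) {m : ℕ}
    (hm : m * h ≤ ρ / 2) (hσκ : 0 ≤ σ + κ) (hκ : κ ≤ dim) :
    m * ∫⁻ w in S, ENNReal.ofReal (‖w‖ ^ (-(dim + σ))) ∂μ ≤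
      ENNReal.ofReal (ρ ^ (-(σ + κ)) * 2 ^ (dim - κ)) *
        ∫⁻ w in ball (0 : E) 1, ENNReal.ofReal (‖w‖ ^ (κ - dim)) ∂μ := by
  have hshift : ∀ i ∈ Finset.range m, ‖((i : ℝ) * h) • e‖ ≤ ρ / 2 := fun i hi => by
    have him : (i : ℝ) * h ≤ m * h := by
      gcongr
      exact (Finset.mem_range.1 hi).le
    rw [norm_smul, he, mul_one, Real.norm_of_nonneg (by positivity)]
    exact him.trans hm
  rw [← lintegral_const_mul' _ _ ENNReal.ofReal_ne_top]
  simp_rw [← ENNReal.ofReal_mul (show 0 ≤ ρ ^ (-(σ + κ)) * 2 ^ (dim - κ) by positivity)]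
  nth_rewrite 1 [← Finset.card_range m]
  refine card_mul_setLIntegral_le_of_pairwiseDisjoint_translates hS
    (pairwiseDisjoint_translates_of_approximatesLinearOn hf hc he hℓe hh hosc _) ?_ ?_
  · rintro i hi _ ⟨w, hw, rfl⟩
    have hw' := mem_ball_zero_iff.1 (hSball hw)
    exact mem_ball_zero_iff.2 ((norm_add_le _ _).trans_lt (by linarith [hshift i hi]))
  · intro i hi w hw
    have hwρ := hSρ w hw
    have hsub := norm_sub_le_norm_add w (((i : ℝ) * h) • e)
    have hadd := norm_add_le w (((i : ℝ) * h) • e)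
    exact ENNReal.ofReal_le_ofReal (rpow_neg_add_le_mul_rpow_sub hρ hwρ
      (by linarith [hshift i hi]) (by linarith [hshift i hi]) hσκ hκ)

lemma setLIntegral_slab_le (hf : ApproximatesLinearOn f ℓ S c) (hc : (c : ℝ) ≤ 1 / 2)
    (he : ‖e‖ = 1) (hℓe : ℓ e = 1) (hS : MeasurableSet S) (hSball : S ⊆ ball 0 (1 / 2)) {h ρ : ℝ}
    (hh : 0 < h) (hhρ : 2 * h ≤ ρ) (hρ1 : ρ ≤ 1) (hSρ : ∀ w ∈ S, ρ ≤ ‖w‖)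
    (hosc : ∀ x ∈ S, ∀ y ∈ S, f x - f y < h / 2) (hσκ : 0 ≤ σ + κ) (hκ : κ ≤ dim) :
    ∫⁻ w in S, ENNReal.ofReal (‖w‖ ^ (-(dim + σ))) ∂μ ≤
      ENNReal.ofReal (4 * h / ρ * (ρ ^ (-(σ + κ)) * 2 ^ (dim - κ))) *
        ∫⁻ w in ball (0 : E) 1, ENNReal.ofReal (‖w‖ ^ (κ - dim)) ∂μ := by
  have hρ : 0 < ρ := by linarith
  let m : ℕ := ⌊ρ / (2 * h)⌋₊
  have hcard : (1 : ℝ≥0∞) ≤ ENNReal.ofReal (4 * h / ρ) * m := by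
    convert one_le_ofReal_two_div_mul_natFloor ((one_le_div (by positivity)).2 hhρ) using 3
    field
  have hm : m * h ≤ ρ / 2 := by
    have hfloor : (m : ℝ) ≤ ρ / (2 * h) := Nat.floor_le (by positivity)
    rw [le_div_iff₀ (by positivity)] at hfloor
    linarith
  calc ∫⁻ w in S, ENNReal.ofReal (‖w‖ ^ (-(dim + σ))) ∂μ
      ≤ ENNReal.ofReal (4 * h / ρ) * m * ∫⁻ w in S, ENNReal.ofReal (‖w‖ ^ (-(dim + σ))) ∂μ :=
        le_mul_of_one_le_left' hcard
    _ ≤ ENNReal.ofReal (4 * h / ρ) * (ENNReal.ofReal (ρ ^ (-(σ + κ)) * 2 ^ (dim - κ)) *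
          ∫⁻ w in ball (0 : E) 1, ENNReal.ofReal (‖w‖ ^ (κ - dim)) ∂μ) := by
        rw [mul_assoc]
        exact mul_le_mul_right (natCast_mul_setLIntegral_slab_le hf hc he hℓe hS hSball hh.le hρ
          hρ1 hSρ hosc hm hσκ hκ) _
    _ = _ := by rw [← mul_assoc, ← ENNReal.ofReal_mul (by positivity)]

lemma setLIntegral_cutoff_sub_le_div (hf : ApproximatesLinearOn f ℓ S c) (hℓ : ‖ℓ‖ ≤ 1)
    (hc : (c : ℝ) ≤ 1 / 2) (he : ‖e‖ = 1) (hℓe : ℓ e = 1) (hfm : Measurable f)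
    (hS : MeasurableSet S) (hSball : S ⊆ ball 0 (1 / 2)) (h0 : 0 ∈ S) (hδ : 0 < δ) (hδ1 : δ ≤ 1)
    (hTδ : 88 ≤ T * δ) (hfS : ∀ w ∈ S, -1 ≤ T * f w) (hf0 : T * δ - 1 ≤ T * f 0)
    (hσκ : 0 ≤ σ + κ) (hκ : κ ≤ dim) :
    ∫⁻ w in S, ENNReal.ofReal (cutoff (T * f w) - cutoff (T * f 0)) *
        ENNReal.ofReal (‖w‖ ^ (-(dim + σ))) ∂μ ≤
      ENNReal.ofReal (22000 / (T * δ) * ((δ / 4) ^ (-(σ + κ)) * 2 ^ (dim - κ))) *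
        ∫⁻ w in ball (0 : E) 1, ENNReal.ofReal (‖w‖ ^ (κ - dim)) ∂μ := by
  have hT : 0 < T := pos_of_mul_pos_left (by linarith) hδ.le
  let slab : Set E := S ∩ {w | T * f w ≤ 4}
  have hslab : MeasurableSet slab := hS.inter (measurableSet_le (by fun_prop) measurable_const)
  have hslabδ : ∀ w ∈ slab, δ / 4 ≤ ‖w‖ := fun w hw => by
    have hlip := abs_sub_le_of_approximatesLinearOn hf hℓ (by linarith) h0 hw.1
    rw [zero_sub, norm_neg] at hlip
    have hw4 : T * f w ≤ 4 := hw.2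
    refine le_of_mul_le_mul_left ?_ hT
    nlinarith [(abs_le.1 hlip).2]
  have hosc : ∀ x ∈ slab, ∀ y ∈ slab, f x - f y < 11 / T / 2 := fun x hx y hy => by
    have hx4 : T * f x ≤ 4 := hx.2
    rw [div_div, lt_div_iff₀ (by positivity)]
    linarith [hfS y hy.1]
  calc ∫⁻ w in S, ENNReal.ofReal (cutoff (T * f w) - cutoff (T * f 0)) *
        ENNReal.ofReal (‖w‖ ^ (-(dim + σ))) ∂μ
      ≤ ENNReal.ofReal 125 * ∫⁻ w in slab, ENNReal.ofReal (‖w‖ ^ (-(dim + σ))) ∂μ :=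
        setLIntegral_cutoff_sub_le_slab hfm hS hfS (cutoff_nonneg _) _
    _ ≤ ENNReal.ofReal 125 * (ENNReal.ofReal (4 * (11 / T) / (δ / 4) *
          ((δ / 4) ^ (-(σ + κ)) * 2 ^ (dim - κ))) *
          ∫⁻ w in ball (0 : E) 1, ENNReal.ofReal (‖w‖ ^ (κ - dim)) ∂μ) := by
        gcongr
        refine setLIntegral_slab_le (hf.mono_set inter_subset_left) hc he hℓe hslab
          (inter_subset_left.trans hSball) (by positivity) ?_ (by linarith) hslabδ hosc hσκ hκ
        rw [← mul_div_assoc, div_le_iff₀ hT]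
        linarith
    _ = _ := by
        rw [← mul_assoc, ← ENNReal.ofReal_mul (by norm_num), ← mul_assoc (125 : ℝ)]
        congr 3
        field

lemma two_mul_rpow_le {τ : ℝ} (hT : 0 < T) (hδ : 0 < δ) (hTδ : T * δ ≤ 88) (hτ : 0 ≤ τ)
    (hκ : 0 ≤ κ) (hτκ : τ + 2 * κ ≤ 1) :
    (2 * T) ^ τ ≤ 176 * ((T * δ) ^ (-(2 * κ)) * δ ^ (-τ)) := by
  have hTδ0 : 0 < T * δ := by positivity
  have h88 : (T * δ) ^ (τ + 2 * κ) ≤ 88 :=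
    calc (T * δ) ^ (τ + 2 * κ) ≤ 88 ^ (τ + 2 * κ) := by gcongr
      _ ≤ 88 := Real.rpow_le_self_of_one_le (by norm_num) hτκ
  have hsplit : (T * δ) ^ τ = (T * δ) ^ (τ + 2 * κ) * (T * δ) ^ (-(2 * κ)) := by
    rw [← Real.rpow_add hTδ0, add_neg_cancel_right]
  calc (2 * T) ^ τ = 2 ^ τ * (T ^ τ * δ ^ τ * δ ^ (-τ)) := by
        rw [Real.mul_rpow zero_le_two hT.le, mul_assoc, ← Real.rpow_add hδ, add_neg_cancel,
          Real.rpow_zero, mul_one]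
    _ = 2 ^ τ * (T * δ) ^ (τ + 2 * κ) * ((T * δ) ^ (-(2 * κ)) * δ ^ (-τ)) := by
        rw [← Real.mul_rpow hT.le hδ.le, hsplit]
        ring
    _ ≤ 2 * 88 * ((T * δ) ^ (-(2 * κ)) * δ ^ (-τ)) := by
        gcongr
        exact Real.rpow_le_self_of_one_le one_le_two (by linarith)
    _ = _ := by norm_num

lemma inv_mul_div_four_rpow_le {τ n : ℝ} (hδ : 0 < δ) (hTδ : 1 ≤ T * δ) (hτ : τ ≤ 1)
    (hκ : 0 ≤ κ) (hκ1 : 2 * κ ≤ 1) :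
    (T * δ)⁻¹ * ((δ / 4) ^ (-τ) * 2 ^ (n - κ)) ≤
      4 * 2 ^ n * ((T * δ) ^ (-(2 * κ)) * δ ^ (-τ)) := by
  have hinv : (T * δ)⁻¹ ≤ (T * δ) ^ (-(2 * κ)) := by
    rw [← Real.rpow_neg_one]
    exact Real.rpow_le_rpow_of_exponent_le hTδ (by linarith)
  have hfour : (δ / 4) ^ (-τ) ≤ 4 * δ ^ (-τ) := by
    rw [div_eq_mul_inv, mul_comm, Real.mul_rpow (by norm_num) hδ.le, Real.inv_rpow zero_le_four,
      Real.rpow_neg zero_le_four, inv_inv]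
    gcongr
    exact Real.rpow_le_self_of_one_le (by norm_num) hτ
  calc (T * δ)⁻¹ * ((δ / 4) ^ (-τ) * 2 ^ (n - κ))
      ≤ (T * δ) ^ (-(2 * κ)) * (4 * δ ^ (-τ) * 2 ^ n) := by
        gcongr
        · exact one_le_two
        · linarith
    _ = _ := by ring

lemma setLIntegral_cutoff_sub_le (hf : ApproximatesLinearOn f ℓ S c) (hℓ : ‖ℓ‖ ≤ 1)
    (hc : (c : ℝ) ≤ 1 / 2) (he : ‖e‖ = 1) (hℓe : ℓ e = 1) (hfm : Measurable f)
    (hS : MeasurableSet S) (hSball : S ⊆ ball 0 (1 / 2)) (h0 : 0 ∈ S) (hδ : 0 < δ) (hδ1 : δ ≤ 1)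
    (hT : 0 < T) (hfS : ∀ w ∈ S, -1 ≤ T * f w) (hf0 : T * δ - 1 ≤ T * f 0)
    (hκ0 : 0 ≤ κ) (hσκ : 0 ≤ σ + κ) (hσκ1 : σ + 3 * κ ≤ 1) (hκ : κ ≤ dim) :
    ∫⁻ w in S, ENNReal.ofReal (cutoff (T * f w) - cutoff (T * f 0)) *
        ENNReal.ofReal (‖w‖ ^ (-(dim + σ))) ∂μ ≤
      ENNReal.ofReal (88000 * 2 ^ dim * ((T * δ) ^ (-(2 * κ)) * δ ^ (-(σ + κ)))) *
        ∫⁻ w in ball (0 : E) 1, ENNReal.ofReal (‖w‖ ^ (κ - dim)) ∂μ := by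
  rcases le_total (T * δ) 88 with hTδ | hTδ
  · refine (setLIntegral_cutoff_sub_le_rpow_mul hf hℓ (by linarith) hS
      (hSball.trans (ball_subset_ball (by norm_num))) h0 hT.le hfS hσκ (by linarith)).trans
      (mul_le_mul_left (ENNReal.ofReal_le_ofReal ?_) _)
    have hpow := two_mul_rpow_le hT hδ hTδ hσκ hκ0 (by linarith)
    have hone : (1 : ℝ) ≤ 2 ^ dim := Real.one_le_rpow one_le_two (by positivity)
    nlinarith [show 0 ≤ (T * δ) ^ (-(2 * κ)) * δ ^ (-(σ + κ)) by positivity]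
  · refine (setLIntegral_cutoff_sub_le_div hf hℓ hc he hℓe hfm hS hSball h0 hδ hδ1 hTδ hfS hf0
      hσκ hκ).trans (mul_le_mul_left (ENNReal.ofReal_le_ofReal ?_) _)
    rw [div_eq_mul_inv, mul_assoc]
    have hinv := inv_mul_div_four_rpow_le (T := T) (n := dim) hδ (by linarith)
      (by linarith : σ + κ ≤ 1) hκ0 (by linarith)
    linarith

variable {D : ℕ → E → ℝ} {d : E → ℝ} {B : Set E} {x : E}

lemma setLIntegral_blowupTerm_sub_le (hD : IsDyadicApprox d D) {k : ℕ}
    (hDk : ApproximatesLinearOn (D k) ℓ B c) (hℓ : ‖ℓ‖ ≤ 1) (hc : (c : ℝ) ≤ 1 / 2) (he : ‖e‖ = 1)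
    (hℓe : ℓ e = 1) (hS : MeasurableSet S) (hSball : S ⊆ ball 0 (1 / 2)) (h0 : 0 ∈ S)
    (hSB : ∀ w ∈ S, x + w ∈ B) (hSd : ∀ w ∈ S, 0 ≤ d (x + w)) (hx : 0 < d x) (hx1 : d x ≤ 1)
    (hκ0 : 0 ≤ κ) (hσκ : 0 ≤ σ + κ) (hσκ1 : σ + 3 * κ ≤ 1) (hκ : κ ≤ dim) :
    ∫⁻ w in S, ENNReal.ofReal (blowupTerm κ D k (x + w) - blowupTerm κ D k x) *
        ENNReal.ofReal (‖w‖ ^ (-(dim + σ))) ∂μ ≤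
      ENNReal.ofReal (88000 * 2 ^ dim * d x ^ (-(σ + 3 * κ))) *
        ENNReal.ofReal ((2 ^ k) ^ (-κ)) *
        ∫⁻ w in ball (0 : E) 1, ENNReal.ofReal (‖w‖ ^ (κ - dim)) ∂μ := by
  have hT : (0 : ℝ) < 2 ^ k := by positivity
  have hlin : ApproximatesLinearOn (fun w => D k (x + w)) ℓ S c := fun w hw v hv => by
    simpa only [add_sub_add_left_eq_sub] using hDk (x + w) (hSB w hw) (x + v) (hSB v hv)
  have hslice := setLIntegral_cutoff_sub_le (μ := μ) (T := 2 ^ k) hlin hℓ hc he hℓe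
    (by have := (hD.contDiff k).continuous; fun_prop) hS hSball h0 hx hx1 hT
    (fun w hw => hD.neg_one_le_two_pow_mul k (hSd w hw))
    (by rw [add_zero]; linarith [(abs_le.1 (hD.abs_two_pow_mul_sub_le k x)).1]) hκ0 hσκ hσκ1 hκ
  rw [add_zero] at hslice
  simp_rw [blowupTerm, ← mul_sub, ENNReal.ofReal_mul (Real.rpow_nonneg hT.le κ), mul_assoc,
    lintegral_const_mul' _ _ ENNReal.ofReal_ne_top] at hslice ⊢
  refine (mul_le_mul_right hslice _).trans_eq ?_
  simp only [← mul_assoc]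
  congr 1
  rw [← ENNReal.ofReal_mul (by positivity), ← ENNReal.ofReal_mul (by positivity)]
  have hTpow : ((2 : ℝ) ^ k) ^ κ * (2 ^ k) ^ (-(2 * κ)) = (2 ^ k) ^ (-κ) := by
    rw [← Real.rpow_add hT]
    ring_nf
  have hdpow : d x ^ (-(2 * κ)) * d x ^ (-(σ + κ)) = d x ^ (-(σ + 3 * κ)) := by
    rw [← Real.rpow_add hx]
    ring_nf
  rw [Real.mul_rpow hT.le hx.le, ← hTpow, ← hdpow]
  ring_nf

lemma setLIntegral_blowupSeries_sub_le (hD : IsDyadicApprox d D)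
    (hDB : ∀ k, ApproximatesLinearOn (D k) ℓ B c) (hℓ : ‖ℓ‖ ≤ 1) (hc : (c : ℝ) ≤ 1 / 2)
    (he : ‖e‖ = 1) (hℓe : ℓ e = 1) (hS : MeasurableSet S) (hSball : S ⊆ ball 0 (1 / 2))
    (h0 : 0 ∈ S) (hSB : ∀ w ∈ S, x + w ∈ B) (hSd : ∀ w ∈ S, 0 ≤ d (x + w)) (hx : 0 < d x)
    (hx1 : d x ≤ 1) (hκ0 : 0 ≤ κ) (hσκ : 0 ≤ σ + κ) (hσκ1 : σ + 3 * κ ≤ 1) (hκ : κ ≤ dim) :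
    ∫⁻ w in S, ENNReal.ofReal (blowupSeries κ D (x + w) - blowupSeries κ D x) *
        ENNReal.ofReal (‖w‖ ^ (-(dim + σ))) ∂μ ≤
      ENNReal.ofReal (88000 * 2 ^ dim * d x ^ (-(σ + 3 * κ))) *
        (∑' k : ℕ, ENNReal.ofReal ((2 ^ k) ^ (-κ))) *
        ∫⁻ w in ball (0 : E) 1, ENNReal.ofReal (‖w‖ ^ (κ - dim)) ∂μ := by
  have hmeas : ∀ k, Measurable fun w => ENNReal.ofReal
      (blowupTerm κ D k (x + w) - blowupTerm κ D k x) * ENNReal.ofReal (‖w‖ ^ (-(dim + σ))) := by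
    intro k
    have hcont := (hD.contDiff_blowupTerm (a := κ) k).continuous
    fun_prop
  calc ∫⁻ w in S, ENNReal.ofReal (blowupSeries κ D (x + w) - blowupSeries κ D x) *
        ENNReal.ofReal (‖w‖ ^ (-(dim + σ))) ∂μ
      ≤ ∫⁻ w in S, ∑' k, ENNReal.ofReal (blowupTerm κ D k (x + w) - blowupTerm κ D k x) *
          ENNReal.ofReal (‖w‖ ^ (-(dim + σ))) ∂μ := by
        gcongr with w
        rw [ENNReal.tsum_mul_right]
        gcongr
        exact ofReal_tsum_sub_tsum_le (hD.summable_blowupTerm hx) fun k => blowupTerm_nonneg ..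
    _ = ∑' k, ∫⁻ w in S, ENNReal.ofReal (blowupTerm κ D k (x + w) - blowupTerm κ D k x) *
          ENNReal.ofReal (‖w‖ ^ (-(dim + σ))) ∂μ :=
        lintegral_tsum fun k => (hmeas k).aemeasurable
    _ ≤ ∑' k : ℕ, ENNReal.ofReal (88000 * 2 ^ dim * d x ^ (-(σ + 3 * κ))) *
          ENNReal.ofReal ((2 ^ k) ^ (-κ)) *
          ∫⁻ w in ball (0 : E) 1, ENNReal.ofReal (‖w‖ ^ (κ - dim)) ∂μ :=
        ENNReal.tsum_le_tsum fun k => setLIntegral_blowupTerm_sub_le hD (hDB k) hℓ hc he hℓe hS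
          hSball h0 hSB hSd hx hx1 hκ0 hσκ hσκ1 hκ
    _ = _ := by rw [ENNReal.tsum_mul_right, ENNReal.tsum_mul_left]

lemma exists_setLIntegral_blowupSeries_sub_le [FiniteDimensional ℝ E]
    (hD : IsDyadicApprox d D) (hDB : ∀ k, ApproximatesLinearOn (D k) ℓ B c) (hℓ : ‖ℓ‖ ≤ 1)
    (hc : (c : ℝ) ≤ 1 / 2) (he : ‖e‖ = 1) (hℓe : ℓ e = 1) (hκ : 0 < κ) (hσκ : 0 ≤ σ + κ)
    (hσκ1 : σ + 3 * κ ≤ 1) :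
    ∃ C, 0 ≤ C ∧ ∀ S x, MeasurableSet S → S ⊆ ball 0 (1 / 2) → 0 ∈ S → (∀ w ∈ S, x + w ∈ B) →
      (∀ w ∈ S, 0 ≤ d (x + w)) → 0 < d x → d x ≤ 1 →
      ∫⁻ w in S, ENNReal.ofReal (blowupSeries κ D (x + w) - blowupSeries κ D x) *
          ENNReal.ofReal (‖w‖ ^ (-(dim + σ))) ∂μ ≤
        ENNReal.ofReal (C * d x ^ (-(σ + 3 * κ))) := by
  have : Nontrivial E := nontrivial_of_ne e 0 (norm_ne_zero_iff.1 (he.trans_ne one_ne_zero))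
  have hdim : (1 : ℝ) ≤ dim := Nat.one_le_cast.2 Module.finrank_pos
  let K : ℝ≥0∞ := ENNReal.ofReal (88000 * 2 ^ dim) *
    (∑' k : ℕ, ENNReal.ofReal ((2 ^ k) ^ (-κ))) *
    ∫⁻ w in ball (0 : E) 1, ENNReal.ofReal (‖w‖ ^ (κ - dim)) ∂μ
  have hK : K ≠ ∞ := ENNReal.mul_ne_top
    (ENNReal.mul_ne_top ENNReal.ofReal_ne_top (tsum_ofReal_two_pow_rpow_neg_lt_top hκ).ne)
    (lintegral_ball_rpow_norm_lt_top μ hκ).ne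
  refine ⟨K.toReal, ENNReal.toReal_nonneg, fun S x hS hSball h0 hSB hSd hx hx1 => ?_⟩
  refine (setLIntegral_blowupSeries_sub_le hD hDB hℓ hc he hℓe hS hSball h0 hSB hSd hx hx1 hκ.le
    hσκ hσκ1 (by linarith)).trans_eq ?_
  rw [ENNReal.ofReal_mul ENNReal.toReal_nonneg, ENNReal.ofReal_toReal hK,
    ENNReal.ofReal_mul (show (0 : ℝ) ≤ 88000 * 2 ^ dim by positivity)]
  simp only [K]
  ring

end NonlocalEstimate

section SignedDistance

variable {Ω : Set (Euc N)} {x x₀ : Euc N}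

lemma lipschitzWith_sdist (Ω : Set (Euc N)) : LipschitzWith (1 + 1) (sdist Ω) :=
  (lipschitz_infDist_pt Ωᶜ).sub (lipschitz_infDist_pt Ω)

lemma sdist_nonneg_of_mem_closure (hx : x ∈ closure Ω) : 0 ≤ sdist Ω x := by
  rw [sdist, ← infDist_closure (s := Ω), infDist_zero_of_mem hx, sub_zero]
  exact infDist_nonneg

lemma sdist_eq_zero_of_mem_frontier (hx : x ∈ frontier Ω) : sdist Ω x = 0 := by
  rw [frontier_eq_closure_inter_closure] at hx
  rw [sdist, ← infDist_closure (s := Ω), ← infDist_closure (s := Ωᶜ), infDist_zero_of_mem hx.1,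
    infDist_zero_of_mem hx.2, sub_zero]

lemma sdist_pos_of_mem (hΩ : IsOpen Ω) (hne : Ωᶜ.Nonempty) (hx : x ∈ Ω) : 0 < sdist Ω x := by
  rw [sdist, infDist_zero_of_mem hx, sub_zero]
  exact (hΩ.isClosed_compl.notMem_iff_infDist_pos hne).1 (notMem_compl_iff.2 hx)

lemma nonempty_compl_of_mem_frontier (hΩ : IsOpen Ω) (hx₀ : x₀ ∈ frontier Ω) : Ωᶜ.Nonempty :=
  ⟨x₀, (hΩ.frontier_eq ▸ hx₀).2⟩

lemma tendsto_sdist_nhdsWithin (hΩ : IsOpen Ω) (hx₀ : x₀ ∈ frontier Ω) :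
    Tendsto (sdist Ω) (𝓝[Ω] x₀) (𝓝[>] 0) := by
  have hne := nonempty_compl_of_mem_frontier hΩ hx₀
  rw [← sdist_eq_zero_of_mem_frontier hx₀]
  refine (lipschitzWith_sdist Ω).continuous.continuousWithinAt.tendsto_nhdsWithin fun x hx => ?_
  rw [mem_Ioi, sdist_eq_zero_of_mem_frontier hx₀]
  exact sdist_pos_of_mem hΩ hne hx

-- The last component of a boundary chart is the signed distance, which is therefore `C¹`.
lemma hasStrictFDerivAt_sdist {hN : 0 < N} (hΩ : IsW2Domain hN Ω) {n : Euc N → Euc N}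
    (hn : IsExteriorNormal Ω n) (hx₀ : x₀ ∈ frontier Ω) :
    HasStrictFDerivAt (sdist Ω) (innerSL ℝ (-(n x₀))) x₀ := by
  obtain ⟨r, ψ, -, hr, hψ, -, -, -, -, hψN⟩ := hΩ.2 x₀ hx₀
  have hψ₀ : ContDiffAt ℝ 1 ψ x₀ := hψ.contDiffAt (ball_mem_nhds _ hr)
  have hcomponent : ContDiffAt ℝ 1 (fun x => ψ x ⟨N - 1, Nat.sub_lt hN Nat.one_pos⟩) x₀ := by
    fun_prop
  have hsdist : ContDiffAt ℝ 1 (sdist Ω) x₀ := hcomponent.congr_of_eventuallyEq <|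
    eventually_of_mem (ball_mem_nhds _ hr) fun x hx => (hψN x hx).symm
  exact hsdist.hasStrictFDerivAt' (hn x₀ hx₀).2.hasFDerivAt one_ne_zero

end SignedDistance

lemma exists_pos_eventually_mul_le_inner {X A E : Type*} [TopologicalSpace X] [TopologicalSpace A]
    [CompactSpace A] [NormedAddCommGroup E] [InnerProductSpace ℝ E] {b : X → A → E} {x₀ : X} {e : E}
    (hb : Continuous fun q : X × A => b q.1 q.2) (hpos : ∀ α, 0 < ⟪b x₀ α, e⟫) :
    ∃ c > 0, ∀ᶠ x in 𝓝 x₀, ∀ α, c * (1 + ‖b x α‖) ≤ ⟪b x α, e⟫ := by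
  have hratio : Continuous fun q : X × A => ⟪b q.1 q.2, e⟫ / (1 + ‖b q.1 q.2‖) := by
    fun_prop (disch := intros; positivity)
  obtain ⟨c, hc, hcb⟩ := isCompact_univ.exists_forall_le' (f := fun α =>
    ⟪b x₀ α, e⟫ / (1 + ‖b x₀ α‖)) (hratio.comp (Continuous.prodMk_right x₀)).continuousOn
    (fun α _ => div_pos (hpos α) (by positivity))
  refine ⟨c / 2, half_pos hc, ?_⟩
  have hnear : ∀ᶠ x in 𝓝 x₀, ∀ α ∈ univ, c / 2 ≤ ⟪b x α, e⟫ / (1 + ‖b x α‖) :=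
    isCompact_univ.eventually_forall_of_forall_eventually fun α hα =>
      (hratio.tendsto (x₀, α)).eventually_const_le ((half_lt_self hc).trans_le (hcb α hα))
  filter_upwards [hnear] with x hx α
  exact (le_div_iff₀ (by positivity)).1 (hx α (mem_univ α))

lemma exists_isDyadicApprox {E : Type*} [NormedAddCommGroup E] [NormedSpace ℝ E]
    [FiniteDimensional ℝ E] {d : E → ℝ} {ℓ : E →L[ℝ] ℝ} {x₀ : E} (hd : UniformContinuous d)
    (hdx₀ : HasStrictFDerivAt d ℓ x₀) {c : ℝ≥0} (hc : 0 < c) :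
    ∃ D, IsDyadicApprox d D ∧ ∃ R > 0, ∀ k, ApproximatesLinearOn (D k) ℓ (ball x₀ R) c := by
  obtain ⟨s, hs, hds⟩ := hdx₀.approximates_deriv_on_nhds (.inr hc)
  obtain ⟨R, hR, hRs⟩ := Metric.mem_nhds_iff.1 hs
  choose D hD hDd hDlin using fun k : ℕ => exists_contDiff_approximatesLinearOn hd
    (half_lt_self hR) (hds.mono_set hRs) (show (0 : ℝ) < 1 / 2 ^ k by positivity)
  exact ⟨D, ⟨hD, hDd⟩, R / 2, half_pos hR, hDlin⟩

lemma eventually_mul_rpow_neg_le_div {c s : ℝ} (hc : 0 < c) (hs : s < 1) (C : ℝ) :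
    ∀ᶠ t in 𝓝[>] (0 : ℝ), C * t ^ (-s) ≤ c / t := by
  have hlim : Tendsto (fun t : ℝ => C * t ^ (1 - s)) (𝓝[>] 0) (𝓝 0) := by
    have hcont := ((Real.continuous_rpow_const (sub_pos.2 hs).le).const_mul C).tendsto 0
    rw [Real.zero_rpow (sub_pos.2 hs).ne', mul_zero] at hcont
    exact hcont.mono_left nhdsWithin_le_nhds
  filter_upwards [hlim.eventually_le_const hc, self_mem_nhdsWithin] with t ht ht0
  rw [le_div_iff₀ ht0, mul_assoc, ← Real.rpow_add_one (ne_of_gt ht0)]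
  convert ht using 3
  ring

lemma exists_modulus_of_rpow_neg_le {X : Type*} {S : Set X} {d U : X → ℝ} {κ : ℝ} (hκ : 0 < κ)
    (hd : ∀ x ∈ S, 0 < d x) (hU : ∀ x ∈ S, d x ^ (-κ) ≤ U x) :
    ∃ ω : ℝ → ℝ, Continuous ω ∧ (∀ s, 0 ≤ ω s) ∧ ω 0 = 0 ∧
      (∃ η > (0 : ℝ), StrictMonoOn ω (Icc 0 η)) ∧ ∀ x ∈ S, 1 / ω (d x) ≤ U x := by
  refine ⟨fun s => |s| ^ κ, continuous_abs.rpow_const fun _ => .inr hκ.le, fun s => by positivity,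
    by simp only [abs_zero, Real.zero_rpow hκ.ne'], ⟨1, one_pos, fun s hs t ht hst => ?_⟩,
    fun x hx => ?_⟩
  · simp only [abs_of_nonneg hs.1, abs_of_nonneg ht.1]
    exact Real.rpow_lt_rpow hs.1 hst hκ
  · simp only [abs_of_pos (hd x hx), one_div, ← Real.rpow_neg (hd x hx).le]
    exact hU x hx

lemma exists_pos_le_forall_mem_ball_inter {X : Type*} [PseudoMetricSpace X] {S : Set X} {x₀ : X}
    {p : X → Prop} {R : ℝ} (hR : 0 < R) (hp : ∀ᶠ x in 𝓝[S] x₀, p x) :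
    ∃ r, 0 < r ∧ r ≤ R ∧ ∀ x ∈ ball x₀ r ∩ S, p x := by
  obtain ⟨r, hr, hpr⟩ := Metric.mem_nhdsWithin_iff.1 hp
  exact ⟨min r R, lt_min hr hR, min_le_right r R,
    fun x hx => hpr ⟨ball_subset_ball (min_le_left r R) hx.1, hx.2⟩⟩

section Supersolution

variable {Ω : Set (Euc N)} {g : Euc N → Euc N → ℝ} {j : Euc N → Euc N → Euc N}
  {Cμ σ Aj Cj ξ : ℝ} {x : Euc N}

lemma Iin_le_of_setLIntegral_le (hM : AssumptionM1 Ω g Cμ σ) (hJ0 : AssumptionJ0 Ω j Aj)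
    (hCj : 0 < Cj) (hx : x ∈ closure Ω) (hJ : ∀ z, ‖j x z‖ ≤ Cj * ‖z‖) {B : ℝ}
    (hB : ∀ L : Euc N →L[ℝ] Euc N, ‖L‖ ≤ Aj → |L.det| ≤ B) {u : Euc N → ℝ} {Q : ℝ} (hQ : 0 ≤ Q)
    (hu : ENNReal.ofReal B * ENNReal.ofReal (Cμ * Cj ^ (N + σ)) *
      ∫⁻ w in {w ∈ ball 0 (Cj * ξ) | x + w ∈ closure Ω},
        ENNReal.ofReal (u (x + w) - u x) * ENNReal.ofReal (‖w‖ ^ (-(N + σ))) ≤ ENNReal.ofReal Q) :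
    Iin Ω j g ξ u x ≤ Q := by
  obtain ⟨hCμ, hσ, -, hg0, hg⟩ := hM
  obtain ⟨-, hbij, hinv, hAj⟩ := hJ0 x hx
  have hS : MeasurableSet {w ∈ ball (0 : Euc N) (Cj * ξ) | x + w ∈ closure Ω} :=
    measurableSet_ball.inter (isClosed_closure.measurableSet.preimage (measurable_const_add x))
  have hsub : {z | ‖z‖ < ξ ∧ x + j x z ∈ closure Ω} ⊆
      j x ⁻¹' {w ∈ ball 0 (Cj * ξ) | x + w ∈ closure Ω} := fun z hz =>
    ⟨mem_ball_zero_iff.2 ((hJ z).trans_lt (mul_lt_mul_of_pos_left hz.1 hCj)), hz.2⟩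
  refine integral_le_of_lintegral_ofReal_le hQ (le_trans ?_ hu)
  simp_rw [ENNReal.ofReal_mul' (hg0 x hx _)]
  refine (lintegral_mono_set hsub).trans ?_
  exact setLIntegral_preimage_comp_mul_le (leftInverse_invFun hbij.1)
    (rightInverse_invFun hbij.2) (hinv.differentiable one_ne_zero) (fun w => hB _ (hAj w)) hCj hJ
    hCμ.le (add_pos_of_nonneg_of_pos N.cast_nonneg hσ.1) (hg x hx) hS
    fun w => ENNReal.ofReal (u (x + w) - u x)

variable {x₀ e : Euc N} {R κ : ℝ} {ε : ℝ≥0} {D : ℕ → Euc N → ℝ}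

lemma exists_Iin_blowupSeries_le (hM : AssumptionM1 Ω g Cμ σ) (hJ0 : AssumptionJ0 Ω j Aj)
    (hCj : 0 < Cj) (hJ : ∀ x ∈ closure Ω, ∀ z, ‖j x z‖ ≤ Cj * ‖z‖) (he : ‖e‖ = 1)
    (hD : IsDyadicApprox (sdist Ω) D)
    (hDe : ∀ k, ApproximatesLinearOn (D k) (innerSL ℝ e) (ball x₀ R) ε) (hε : (ε : ℝ) ≤ 1 / 2)
    (hκ : 0 < κ) (hσκ : σ + 3 * κ ≤ 1) :
    ∃ C, ∀ ξ x, 0 < ξ → Cj * ξ ≤ 1 / 2 → ball x (Cj * ξ) ⊆ ball x₀ R → x ∈ closure Ω →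
      0 < sdist Ω x → sdist Ω x ≤ 1 →
      Iin Ω j g ξ (blowupSeries κ D) x ≤ C * sdist Ω x ^ (-(σ + 3 * κ)) := by
  have hσ := hM.2.1.1
  have hℓe : innerSL ℝ e e = 1 := by
    rw [innerSL_apply_apply, real_inner_self_eq_norm_sq, he, one_pow]
  obtain ⟨B, hB⟩ := exists_abs_det_le (E := Euc N) Aj
  obtain ⟨C, hC, hbound⟩ := exists_setLIntegral_blowupSeries_sub_le (μ := volume) (σ := σ) hD hDe
    (by rw [innerSL_apply_norm, he]) hε he hℓe hκ (by positivity) hσκ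
  rw [finrank_euclideanSpace_fin] at hbound
  let K := (ENNReal.ofReal B * ENNReal.ofReal (Cμ * Cj ^ (N + σ))).toReal
  refine ⟨K * C, fun ξ x hξ hξ2 hball hx hd hd1 =>
    Iin_le_of_setLIntegral_le hM hJ0 hCj hx (hJ x hx) hB (by positivity) ?_⟩
  have hjumps := hbound {w ∈ ball 0 (Cj * ξ) | x + w ∈ closure Ω} x
    (measurableSet_ball.inter (isClosed_closure.measurableSet.preimage (measurable_const_add x)))
    ((sep_subset _ _).trans (ball_subset_ball hξ2))
    ⟨mem_ball_self (by positivity), by rwa [add_zero]⟩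
    (fun w hw => hball (by simpa using hw.1)) (fun w hw => sdist_nonneg_of_mem_closure hw.2) hd hd1
  refine (mul_le_mul_right hjumps _).trans_eq ?_
  rw [mul_assoc K, ENNReal.ofReal_mul ENNReal.toReal_nonneg, ENNReal.ofReal_toReal (by finiteness)]

lemma inner_gradient_blowupSeries_le (hD : IsDyadicApprox (sdist Ω) D)
    (hDe : ∀ k, ApproximatesLinearOn (D k) (innerSL ℝ e) (ball x₀ R) ε) (hκ : 0 ≤ κ)
    (hx : x ∈ ball x₀ R) (hd : 0 < sdist Ω x) (hd1 : sdist Ω x ≤ 1) {c : ℝ} (hc : 0 ≤ c)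
    (hεc : ε ≤ c) {v : Euc N} (hv : c * (1 + ‖v‖) ≤ ⟪v, e⟫) :
    ⟪v, gradient (blowupSeries κ D) x⟫ ≤ -(c / sdist Ω x) := by
  rw [real_inner_comm, gradient, InnerProductSpace.toDual_symm_apply]
  refine hD.fderiv_blowupSeries_le hκ (lipschitzWith_sdist Ω).continuous.continuousAt hd hd1 hc
    fun k => ?_
  have hclose := abs_fderiv_sub_le_of_approximatesLinearOn (hDe k) (isOpen_ball.mem_nhds hx)
    ((hD.contDiff k).differentiable two_ne_zero x) v
  rw [innerSL_apply_apply, real_inner_comm] at hclose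
  have hslack : ε * ‖v‖ ≤ c * ‖v‖ := by gcongr
  linarith [(abs_le.1 hclose).1]

theorem blowup_supersolution_general (hΩ : IsOpen Ω) (hx₀ : x₀ ∈ frontier Ω) (he : ‖e‖ = 1)
    (hdx₀ : HasStrictFDerivAt (sdist Ω) (innerSL ℝ e) x₀) (hM : AssumptionM1 Ω g Cμ σ)
    (hJ0 : AssumptionJ0 Ω j Aj) (hCj : 0 < Cj) (hJ : ∀ x ∈ closure Ω, ∀ z, ‖j x z‖ ≤ Cj * ‖z‖)
    {A : Type*} {b : Euc N → A → Euc N} {c : ℝ} (hc : 0 < c)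
    (hb : ∀ᶠ x in 𝓝[Ω] x₀, ∀ α, c * (1 + ‖b x α‖) ≤ ⟪b x α, e⟫) :
    ∃ r > (0 : ℝ), ∃ U : Euc N → ℝ,
      (∀ x ∈ ball x₀ r ∩ Ω, 0 < U x) ∧
      ContDiffOn ℝ 2 U (ball x₀ r ∩ Ω) ∧
      (∀ ξ : ℝ, 0 < ξ → ξ < Cj⁻¹ * r / 2 →
        ∀ x ∈ ball x₀ (r / 2) ∩ Ω, ∀ α : A,
          0 ≤ -⟪b x α, gradient U x⟫ - Iin Ω j g ξ U x) ∧
      (∃ ω : ℝ → ℝ, Continuous ω ∧ (∀ s, 0 ≤ ω s) ∧ ω 0 = 0 ∧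
        (∃ η > (0 : ℝ), StrictMonoOn ω (Icc 0 η)) ∧
        ∀ x ∈ ball x₀ r ∩ Ω, 1 / ω (sdist Ω x) ≤ U x) := by
  obtain ⟨κ, hκ, hσκ⟩ : ∃ κ > 0, σ + 3 * κ < 1 :=
    ⟨(1 - σ) / 4, by linarith [hM.2.1.2], by linarith [hM.2.1.2]⟩
  obtain ⟨ε, hε, hεc, hε2⟩ : ∃ ε : ℝ≥0, 0 < ε ∧ (ε : ℝ) ≤ c ∧ (ε : ℝ) ≤ 1 / 2 :=
    ⟨⟨min c (1 / 2), by positivity⟩, lt_min hc one_half_pos, min_le_left _ _, min_le_right _ _⟩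
  obtain ⟨D, hD, R, hR, hDe⟩ :=
    exists_isDyadicApprox (lipschitzWith_sdist Ω).uniformContinuous hdx₀ hε
  obtain ⟨C, hC⟩ := exists_Iin_blowupSeries_le hM hJ0 hCj hJ he hD hDe hε2 hκ hσκ.le
  have hsmall : ∀ᶠ t in 𝓝[>] (0 : ℝ), t ≤ 1 := nhdsWithin_le_nhds (Iic_mem_nhds one_pos)
  obtain ⟨r, hr, hrmin, hnear⟩ := exists_pos_le_forall_mem_ball_inter (lt_min hR one_pos) <|
    hb.and <| (tendsto_sdist_nhdsWithin hΩ hx₀).eventually <|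
      (hsmall.and self_mem_nhdsWithin).and (eventually_mul_rpow_neg_le_div hc hσκ C)
  obtain ⟨hrR, hr1⟩ := le_min_iff.1 hrmin
  have hlower : ∀ x ∈ ball x₀ r ∩ Ω, sdist Ω x ^ (-κ) ≤ blowupSeries κ D x := fun x hx =>
    hD.rpow_neg_le_blowupSeries hκ.le (hnear x hx).2.1.2 (hnear x hx).2.1.1
  refine ⟨r, hr, blowupSeries κ D,
    fun x hx => (Real.rpow_pos_of_pos (hnear x hx).2.1.2 _).trans_le (hlower x hx),
    fun x hx => (hD.contDiffAt_blowupSeries (lipschitzWith_sdist Ω).continuous.continuousAt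
      (hnear x hx).2.1.2).contDiffWithinAt, fun ξ hξ hξr x hx α => ?_,
    exists_modulus_of_rpow_neg_le hκ (fun x hx => (hnear x hx).2.1.2) hlower⟩
  have hreach : Cj * ξ < r / 2 := by
    rwa [mul_div_assoc, ← div_eq_inv_mul, lt_div_iff₀' hCj] at hξr
  have hball : ball x (Cj * ξ) ⊆ ball x₀ R := ball_subset_ball' <| by
    linarith [mem_ball.1 hx.1]
  obtain ⟨hdrift, ⟨hd1, hd⟩, horders⟩ := hnear x ⟨ball_subset_ball (half_le_self hr.le) hx.1, hx.2⟩
  have htransport := inner_gradient_blowupSeries_le hD hDe hκ.le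
    (hball (mem_ball_self (by positivity))) hd hd1 hc.le hεc (hdrift α)
  have hjumps := hC ξ x hξ (by linarith) hball (subset_closure hx.2) hd hd1
  linarith

end Supersolution

/-- **Existence of a blow-up supersolution near `Γ_in` (Lemma `lemblowup`).**
Under (O), (M), (J0), (J1), for a continuous bounded drift `b` which is Lipschitz in `x`
uniformly in the control, every `x̄ ∈ Γ_in` admits `r > 0` and a positive function
`U ∈ C²(B_r(x̄) ∩ Ω)` such that for every `0 < ξ < C_j⁻¹ r / 2`:
(i)  `-b(x,α)·DU(x) - I_ξ[U](x) ≥ 0` on `B_{r/2}(x̄) ∩ Ω` for every control `α`, and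
(ii) `U(x) ≥ 1/ω_r(d(x))` on `B_r(x̄) ∩ Ω` for some nonnegative continuous `ω_r`,
strictly increasing near `0`, with `ω_r(0) = 0`. -/
theorem blowup_supersolution
    (hN : 0 < N) (Ω : Set (Euc N)) (hΩ : IsW2Domain hN Ω)
    (n : Euc N → Euc N) (hn : IsExteriorNormal Ω n)
    (g : Euc N → Euc N → ℝ) (Cμ Dμ σ : ℝ) (hM : AssumptionM Ω g Cμ Dμ σ)
    (j : Euc N → Euc N → Euc N) (Aj : ℝ) (hJ0 : AssumptionJ0 Ω j Aj)
    (Cj' Cj Dj : ℝ) (hJ1 : AssumptionJ1 Ω j Cj' Cj Dj)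
    {A : Type} [MetricSpace A] [CompactSpace A] [Nonempty A]
    (b : Euc N → A → Euc N)
    (hbc : Continuous (fun q : Euc N × A => b q.1 q.2)) (hbb : ∃ M, ∀ x α, ‖b x α‖ ≤ M)
    (hbL : AssumptionL Ω b) :
    ∀ x₀ ∈ GammaIn Ω n b, ∃ r > (0:ℝ), ∃ U : Euc N → ℝ,
      (∀ x ∈ ball x₀ r ∩ Ω, 0 < U x) ∧
      ContDiffOn ℝ 2 U (ball x₀ r ∩ Ω) ∧
      (∀ ξ : ℝ, 0 < ξ → ξ < Cj⁻¹ * r / 2 →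
        ∀ x ∈ ball x₀ (r / 2) ∩ Ω, ∀ α : A,
          0 ≤ -⟪b x α, gradient U x⟫ - Iin Ω j g ξ U x) ∧
      (∃ ω : ℝ → ℝ, Continuous ω ∧ (∀ s, 0 ≤ ω s) ∧ ω 0 = 0 ∧
        (∃ η > (0:ℝ), StrictMonoOn ω (Icc 0 η)) ∧
        ∀ x ∈ ball x₀ r ∩ Ω, 1 / ω (sdist Ω x) ≤ U x) := by
  intro x₀ hx₀
  obtain ⟨c, hc, hb⟩ := exists_pos_eventually_mul_le_inner (x₀ := x₀) (e := -(n x₀)) hbc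
    fun α => by rw [inner_neg_right]; exact neg_pos.2 (hx₀.2 α)
  exact blowup_supersolution_general hΩ.1 hx₀.1 ((norm_neg _).trans (hn x₀ hx₀.1).1)
    (hasStrictFDerivAt_sdist hΩ hn hx₀.1) hM.1 hJ0 hJ1.2.1
    (fun x hx z => (hJ1.2.2.2.1 x hx z).2) hc (nhdsWithin_le_nhds hb)

end Censored

end
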